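/- arXiv:2603.29823 — 2 statements merged into one kernel-verified Lean document; each statement's English description precedes it below -/
import Mathlib

section
/- Let s ∈ (0,1), q ≥ 2, u ∈ C_c^∞(ℝⁿ), and let U be its Caffarelli–Silvestre extension. Then for every x ∈ ℝⁿ, (1/q) Λ^s( |u|^q )(x) − |u(x)|^{q−2} u(x) · Λ^s u(x) = (4(q−1)/q²) β_s ∫₀^∞ ( P_z^{(s)} ∗ ( (q²/4) |U(·,z)|^{q−2} |∇̃U(·,z)|² ) )(x) z^{1−2s} dz, where (q²/4)|U|^{q−2}|∇̃U|² = |∇̃(|U|^{q/2})|² and |∇̃U|² = |∇_x U|² + |∂_z U|² (pointwise Stroock–Varopoulos identity). -/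
open MeasureTheory Filter Set
open scoped Topology ENNReal NNReal

noncomputable section

/-- `ℝⁿ` with the Euclidean norm. -/
abbrev En (n : ℕ) := EuclideanSpace ℝ (Fin n)

/-- The normalizing constant `p(n,s) = Γ(n/2+s)/(π^{n/2} Γ(s))` of the Poisson kernel. -/
def pns (n : ℕ) (s : ℝ) : ℝ :=
  Real.Gamma ((n : ℝ) / 2 + s) / (Real.pi ^ ((n : ℝ) / 2) * Real.Gamma s)

/-- The fractional Poisson kernel `P_z^{(s)}(x) = p(n,s) z^{2s} (|x|² + z²)^{-(n+2s)/2}`. -/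
def Pker (n : ℕ) (s z : ℝ) (x : En n) : ℝ :=
  pns n s * z ^ (2 * s) * (‖x‖ ^ 2 + z ^ 2) ^ (-((n : ℝ) + 2 * s) / 2)

/-- Convolution with the fractional Poisson kernel in the first variable, at fixed `z`. -/
def Pconv (n : ℕ) (s z : ℝ) (f : En n → ℝ) (x : En n) : ℝ :=
  ∫ y, Pker n s z (x - y) * f y

/-- The Caffarelli–Silvestre extension `U(x,z) = (P_z^{(s)} ∗ u)(x)`. -/
def CSext (n : ℕ) (s : ℝ) (u : En n → ℝ) (x : En n) (z : ℝ) : ℝ :=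
  Pconv n s z u x

/-- The constant `C(n,s) = 4^s Γ(n/2+s) / (π^{n/2} |Γ(-s)|)`. -/
def Cns (n : ℕ) (s : ℝ) : ℝ :=
  4 ^ s * Real.Gamma ((n : ℝ) / 2 + s) / (Real.pi ^ ((n : ℝ) / 2) * |Real.Gamma (-s)|)

/-- The fractional Laplacian `(-Δ)^s w(x)` as a principal-value singular integral. -/
def fracLap (n : ℕ) (s : ℝ) (w : En n → ℝ) (x : En n) : ℝ :=
  Cns n s * limUnder (𝓝[>] (0 : ℝ))
    (fun ε : ℝ => ∫ y in {y : En n | ε < ‖x - y‖}, (w x - w y) / ‖x - y‖ ^ ((n : ℝ) + 2 * s))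

/-- `Λ^s w := -(-Δ)^s w`. -/
def Lam (n : ℕ) (s : ℝ) (w : En n → ℝ) (x : En n) : ℝ := - fracLap n s w x

/-- The first-order carré du champ `Γ₁(u,v) = ½(Λ^s(uv) - u Λ^s v - v Λ^s u)`. -/
def Gamma1 (n : ℕ) (s : ℝ) (u v : En n → ℝ) (x : En n) : ℝ :=
  (Lam n s (fun y => u y * v y) x - u x * Lam n s v x - v x * Lam n s u x) / 2

/-- The constant `β_s = 2^{2s-1} Γ(s)/Γ(1-s)`. -/
def betaS (s : ℝ) : ℝ := 2 ^ (2 * s - 1) * Real.Gamma s / Real.Gamma (1 - s)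

/-- Partial derivative in the `i`-th coordinate direction. -/
def pd {n : ℕ} (i : Fin n) (f : En n → ℝ) (x : En n) : ℝ :=
  fderiv ℝ f x (EuclideanSpace.single i 1)

/-- The Laplacian in the `x`-variables. -/
def lapX {n : ℕ} (f : En n → ℝ) (x : En n) : ℝ := ∑ i, pd i (pd i f) x

/-- The degenerate operator `L_s W = div_{x,z}(z^{1-2s} ∇̃W)`, written out as
`z^{1-2s} Δ_x W + ∂_z(z^{1-2s} ∂_z W)`. -/
def LsOp {n : ℕ} (s : ℝ) (W : En n → ℝ → ℝ) (x : En n) (z : ℝ) : ℝ :=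
  z ^ (1 - 2 * s) * lapX (fun y => W y z) x
    + deriv (fun t => t ^ (1 - 2 * s) * deriv (W x) t) z

/-- basic kernel -/
def kk {n : ℕ} (b z : ℝ) (v : En n) : ℝ := (‖v‖ ^ 2 + z ^ 2) ^ (-b)

lemma rho_pos {n : ℕ} {z : ℝ} (hz : 0 < z) (v : En n) : 0 < ‖v‖ ^ 2 + z ^ 2 := by positivity

lemma kk_pos {n : ℕ} (b : ℝ) {z : ℝ} (hz : 0 < z) (v : En n) : 0 < kk b z v :=
  Real.rpow_pos_of_pos (rho_pos hz v) _

lemma kk_neg {n : ℕ} (b z : ℝ) (v : En n) : kk b z (-v) = kk b z v := by simp [kk]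

lemma kk_cont {n : ℕ} (b : ℝ) {z : ℝ} (hz : 0 < z) : Continuous (fun v : En n => kk b z v) := by
  unfold kk
  refine Continuous.rpow_const (by fun_prop) (fun v => Or.inl (rho_pos hz v).ne')

lemma kk_succ {n : ℕ} (b : ℝ) {z : ℝ} (hz : 0 < z) (v : En n) :
    (‖v‖ ^ 2 + z ^ 2) * kk (b + 1) z v = kk b z v := by
  unfold kk
  have h := rho_pos hz v
  rw [mul_comm, ← Real.rpow_add_one h.ne']
  congr 1; ring

lemma kk_integrable {n : ℕ} {b : ℝ} (hb : (n : ℝ) / 2 < b) {z : ℝ} (hz : 0 < z) :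
    Integrable (fun v : En n => kk b z v) := by
  have h1 := integrable_rpow_neg_one_add_norm_sq (E := En n) (μ := volume) (r := 2 * b)
    (by simp; linarith)
  have h2 := (h1.comp_smul (R := z⁻¹) (by positivity)).const_mul ((z ^ 2) ^ (-b))
  refine h2.congr (Eventually.of_forall fun v => ?_)
  simp only [kk, norm_smul]
  have : -(2 * b) / 2 = -b := by ring
  rw [this, ← Real.mul_rpow (by positivity) (by positivity)]
  congr 1
  rw [Real.norm_of_nonneg (by positivity)]
  field_simp
  ring

/-- value of the kernel integral -/
lemma kk_integral {n : ℕ} {b : ℝ} (hb : (n : ℝ) / 2 < b) {z : ℝ} (hz : 0 < z) :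
    ∫ v : En n, kk b z v =
      Real.pi ^ ((n : ℝ) / 2) * Real.Gamma (b - n / 2) / Real.Gamma b
        * (z ^ 2) ^ ((n : ℝ) / 2 - b) := by
  have hb0 : 0 < b := lt_of_le_of_lt (by positivity) hb
  have hG := Real.Gamma_pos_of_pos hb0
  have e1 : ∀ v : En n, Real.Gamma b * kk b z v =
      ∫ t in Ioi (0 : ℝ), t ^ (b - 1) * Real.exp (-((‖v‖ ^ 2 + z ^ 2) * t)) := by
    intro v
    rw [Real.integral_rpow_mul_exp_neg_mul_Ioi hb0 (rho_pos hz v), kk, Real.rpow_neg (rho_pos hz v).le,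
      one_div, Real.inv_rpow (rho_pos hz v).le, mul_comm]
  have hprodint : Integrable (fun p : En n × ℝ => p.2 ^ (b - 1) * Real.exp (-((‖p.1‖ ^ 2 + z ^ 2) * p.2)))
      ((volume : Measure (En n)).prod (volume.restrict (Ioi (0 : ℝ)))) := by
    have hm : AEStronglyMeasurable (fun p : En n × ℝ => p.2 ^ (b - 1) * Real.exp (-((‖p.1‖ ^ 2 + z ^ 2) * p.2)))
      ((volume : Measure (En n)).prod (volume.restrict (Ioi (0 : ℝ)))) := by
      apply Measurable.aestronglyMeasurable
      fun_prop
    rw [integrable_prod_iff hm]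
    constructor
    · refine Eventually.of_forall fun v => ?_
      have := integrableOn_rpow_mul_exp_neg_mul_rpow (p := 1) (s := b - 1) (b := ‖v‖ ^ 2 + z ^ 2)
        (by linarith) one_pos (rho_pos hz v)
      simpa only [IntegrableOn, Real.rpow_one, neg_mul] using this
    · refine ((kk_integrable hb hz).const_mul (Real.Gamma b)).congr (Eventually.of_forall fun v => ?_)
      refine (e1 v).trans ?_
      refine setIntegral_congr_fun measurableSet_Ioi fun t ht => ?_
      simp only
      rw [Real.norm_of_nonneg]
      have : (0:ℝ) < t := ht
      positivity
  have e2 : Real.Gamma b * ∫ v : En n, kk b z v =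
      ∫ t in Ioi (0 : ℝ), ∫ v : En n, t ^ (b - 1) * Real.exp (-((‖v‖ ^ 2 + z ^ 2) * t)) := by
    rw [← integral_const_mul]
    simp_rw [e1]
    exact integral_integral_swap hprodint
  have e3 : ∫ t in Ioi (0 : ℝ), ∫ v : En n, t ^ (b - 1) * Real.exp (-((‖v‖ ^ 2 + z ^ 2) * t))
      = ∫ t in Ioi (0 : ℝ), Real.pi ^ ((n : ℝ) / 2) *
        (t ^ ((b - n / 2) - 1) * Real.exp (-(z ^ 2 * t))) := by
    refine setIntegral_congr_fun measurableSet_Ioi fun t ht => ?_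
    have ht : (0:ℝ) < t := ht
    have : ∀ v : En n, t ^ (b - 1) * Real.exp (-((‖v‖ ^ 2 + z ^ 2) * t)) =
        (t ^ (b - 1) * Real.exp (-(z ^ 2 * t))) * Real.exp (-t * ‖v‖ ^ 2) := by
      intro v
      rw [mul_assoc, ← Real.exp_add]; congr 2; ring
    simp_rw [this]
    rw [integral_const_mul, GaussianFourier.integral_rexp_neg_mul_sq_norm ht]
    simp only [finrank_euclideanSpace, Fintype.card_fin]
    rw [Real.div_rpow Real.pi_pos.le ht.le, show b - n / 2 - 1 = (b - 1) - n / 2 by ring,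
      Real.rpow_sub ht (b - 1)]
    ring
  rw [e3, integral_const_mul,
    Real.integral_rpow_mul_exp_neg_mul_Ioi (by linarith) (by positivity)] at e2
  rw [eq_comm, show (n : ℝ) / 2 - b = -(b - n / 2) by ring, Real.rpow_neg (by positivity),
    ← Real.inv_rpow (by positivity), ← one_div (z ^ 2)]
  field_simp at e2 ⊢
  linarith

lemma kk_hasDerivAt {n : ℕ} (b : ℝ) {z : ℝ} (hz : 0 < z) (v : En n) :
    HasDerivAt (fun z => kk b z v) (-2 * b * z * kk (b + 1) z v) z := by
  unfold kk
  have h : HasDerivAt (fun z : ℝ => ‖v‖ ^ 2 + z ^ 2) (2 * z) z := by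
    have := (hasDerivAt_pow 2 z).const_add (‖v‖ ^ 2)
    simpa using this
  convert h.rpow_const (p := -b) (Or.inl (rho_pos hz v).ne') using 1
  rw [show -(b + 1) = -b - 1 by ring]; ring

lemma kk_line {n : ℕ} (b : ℝ) {z : ℝ} (hz : 0 < z) (v : En n) (i : Fin n) :
    HasLineDerivAt ℝ (fun v => kk b z v) (-2 * b * v i * kk (b + 1) z v) v
      (EuclideanSpace.single i 1) := by
  unfold kk
  have h0 : HasFDerivAt (fun v : En n => ‖v‖ ^ 2 + z ^ 2) (2 • (innerSL ℝ v)) v :=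
    (hasStrictFDerivAt_norm_sq v).hasFDerivAt.add_const _
  have h := h0.hasLineDerivAt (EuclideanSpace.single i (1:ℝ))
  unfold HasLineDerivAt at h ⊢
  have h2 := h.rpow_const (p := -b) (Or.inl (by simpa using (rho_pos hz v).ne'))
  refine h2.congr_deriv ?_
  rw [show -(b + 1) = -b - 1 by ring]
  simp [EuclideanSpace.inner_single_right]
  left; ring

lemma coord_line {n : ℕ} (v : En n) (i : Fin n) :
    HasLineDerivAt ℝ (fun v : En n => v i) 1 v (EuclideanSpace.single i 1) := by
  unfold HasLineDerivAt
  have : (fun t : ℝ => (v + t • EuclideanSpace.single i (1:ℝ)) i) = fun t => v i + t := by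
    ext t; simp
  rw [this]
  simpa using (hasDerivAt_id (0:ℝ)).const_add (v i)

lemma abs_int_le {n : ℕ} {f g : En n → ℝ} (hg : Integrable g) (h : ∀ v, |f v| ≤ g v) :
    |∫ v, f v| ≤ ∫ v, g v := by
  rw [← Real.norm_eq_abs]
  exact norm_integral_le_of_norm_le hg (Eventually.of_forall h)

/-- convolution -/
def cv {n : ℕ} (k f : En n → ℝ) (y : En n) : ℝ := ∫ v, k v * f (y - v)

lemma cv_eq {n : ℕ} (k f : En n → ℝ) (y : En n) : cv k f y = ∫ v, k (y - v) * f v := by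
  unfold cv
  rw [← integral_sub_left_eq_self _ volume y]
  simp

lemma cv_int {n : ℕ} {k f : En n → ℝ} {M : ℝ} (hk : Integrable k) (hf : Continuous f)
    (hM : ∀ y, |f y| ≤ M) (y : En n) : Integrable (fun v => k v * f (y - v)) := by
  refine hk.mul_bdd (c := M) ?_ ?_
  · exact (hf.comp (by fun_prop)).aestronglyMeasurable
  · exact Eventually.of_forall fun v => hM _

lemma cv_bound {n : ℕ} {k f : En n → ℝ} {M : ℝ} (hk : Integrable k)
    (hM : ∀ y, |f y| ≤ M) (y : En n) : |cv k f y| ≤ M * ∫ v, |k v| := by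
  rw [← integral_const_mul]
  refine abs_int_le (hk.abs.const_mul M) (fun v => ?_)
  rw [abs_mul, mul_comm]
  exact mul_le_mul_of_nonneg_right (hM _) (abs_nonneg _)

lemma cv_cont {n : ℕ} {k f : En n → ℝ} {M : ℝ} (hk : Integrable k) (hf : Continuous f)
    (hM : ∀ y, |f y| ≤ M) : Continuous (cv k f) := by
  unfold cv
  refine continuous_of_dominated (bound := fun v => M * |k v|) ?_ ?_ (hk.abs.const_mul M) ?_
  · exact fun y => (cv_int hk hf hM y).aestronglyMeasurable
  · intro y
    refine Eventually.of_forall fun v => ?_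
    rw [norm_mul, mul_comm]
    exact mul_le_mul_of_nonneg_right (hM _) (norm_nonneg _)
  · refine Eventually.of_forall fun v => ?_
    exact continuous_const.mul (hf.comp (by fun_prop))

lemma cv_fderiv {n : ℕ} {k f : En n → ℝ} {M M' : ℝ} (hk : Integrable k) (hf : ContDiff ℝ 1 f)
    (hM : ∀ y, |f y| ≤ M) (hM' : ∀ y, ‖fderiv ℝ f y‖ ≤ M') (y : En n) :
    HasFDerivAt (cv k f) (∫ v, k v • fderiv ℝ f (y - v)) y ∧
      ∀ e, (∫ v, k v • fderiv ℝ f (y - v)) e = cv k (fun w => fderiv ℝ f w e) y := by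
  have hcd : Continuous (fderiv ℝ f) := hf.continuous_fderiv one_ne_zero
  have hmeas : AEStronglyMeasurable (fun v => k v • fderiv ℝ f (y - v)) volume :=
    hk.aestronglyMeasurable.smul (hcd.comp (by fun_prop)).aestronglyMeasurable
  have hb : ∀ v (y : En n), ‖k v • fderiv ℝ f (y - v)‖ ≤ M' * |k v| := by
    intro v y
    rw [norm_smul, mul_comm]
    exact mul_le_mul_of_nonneg_right (hM' _) (norm_nonneg _)
  constructor
  · refine hasFDerivAt_integral_of_dominated_of_fderiv_le (s := univ)
      (F := fun y v => k v * f (y - v)) (F' := fun y v => k v • fderiv ℝ f (y - v))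
      (bound := fun v => M' * |k v|) univ_mem ?_ (cv_int hk hf.continuous hM y) hmeas ?_
      (hk.abs.const_mul M') ?_
    · exact Eventually.of_forall fun y => (cv_int hk hf.continuous hM y).aestronglyMeasurable
    · exact Eventually.of_forall fun v y _ => hb v y
    · refine Eventually.of_forall fun v y _ => ?_
      have h1 : HasFDerivAt f (fderiv ℝ f (y - v)) (y - v) :=
        (hf.differentiable one_ne_zero _).hasFDerivAt
      have h2 : HasFDerivAt (fun y => f (y - v)) (fderiv ℝ f (y - v)) y := by
        have := h1.comp y ((hasFDerivAt_id y).sub_const v)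
        simpa using! this
      exact h2.const_mul (k v)
  · intro e
    have hI : Integrable (fun v => k v • fderiv ℝ f (y - v)) :=
      (hk.abs.const_mul M').mono' hmeas (Eventually.of_forall fun v => hb v y)
    rw [ContinuousLinearMap.integral_apply hI]
    simp [cv]

/-- smooth compactly supported functions -/
def IsTest {n : ℕ} (u : En n → ℝ) : Prop := ContDiff ℝ (⊤ : ℕ∞) u ∧ HasCompactSupport u

lemma IsTest.pd {n : ℕ} {u : En n → ℝ} (h : IsTest u) (i : Fin n) : IsTest (pd i u) := by
  constructor
  · have : ContDiff ℝ (⊤ : ℕ∞) (fderiv ℝ u) := h.1.fderiv_right (by simp)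
    exact this.clm_apply contDiff_const
  · exact h.2.fderiv_apply (𝕜 := ℝ) _

lemma IsTest.bdd {n : ℕ} {u : En n → ℝ} (h : IsTest u) : ∃ M, 0 < M ∧ ∀ y, |u y| ≤ M := by
  obtain ⟨C, hC⟩ := h.1.continuous.bounded_above_of_compact_support h.2
  exact ⟨max C 1, by positivity, fun y => (hC y).trans (le_max_left _ _)⟩

lemma IsTest.c1 {n : ℕ} {u : En n → ℝ} (h : IsTest u) : ContDiff ℝ 1 u :=
  h.1.of_le (by exact_mod_cast le_top)

lemma IsTest.fbdd {n : ℕ} {u : En n → ℝ} (h : IsTest u) :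
    ∃ M, 0 < M ∧ ∀ y, ‖fderiv ℝ u y‖ ≤ M := by
  obtain ⟨C, hC⟩ := (h.c1.continuous_fderiv one_ne_zero).bounded_above_of_compact_support
    (h.2.fderiv (𝕜 := ℝ))
  exact ⟨max C 1, by positivity, fun y => (hC y).trans (le_max_left _ _)⟩

lemma IsTest.lip {n : ℕ} {u : En n → ℝ} (h : IsTest u) :
    ∃ L, 0 < L ∧ ∀ x y, |u y - u x| ≤ L * ‖y - x‖ := by
  obtain ⟨C, hC0, hC⟩ := h.fbdd
  refine ⟨C, hC0, fun x y => ?_⟩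
  exact convex_univ.norm_image_sub_le_of_norm_fderiv_le (𝕜 := ℝ)
    (fun z _ => h.c1.differentiable one_ne_zero z) (fun z _ => hC z) (mem_univ x) (mem_univ y)

lemma IsTest.flip {n : ℕ} {u : En n → ℝ} (h : IsTest u) :
    ∃ L, 0 < L ∧ ∀ x y, ‖fderiv ℝ u y - fderiv ℝ u x‖ ≤ L * ‖y - x‖ := by
  have h1 : ContDiff ℝ 1 (fderiv ℝ u) := h.1.fderiv_right (WithTop.coe_le_coe.2 le_top)
  obtain ⟨C, hC⟩ := (h1.continuous_fderiv one_ne_zero).bounded_above_of_compact_support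
    ((h.2.fderiv (𝕜 := ℝ)).fderiv (𝕜 := ℝ))
  refine ⟨max C 1, by positivity, fun x y => ?_⟩
  exact convex_univ.norm_image_sub_le_of_norm_fderiv_le (𝕜 := ℝ)
    (fun z _ => h1.differentiable one_ne_zero z) (fun z _ => (hC z).trans (le_max_left _ _))
    (mem_univ x) (mem_univ y)

lemma IsTest.taylor {n : ℕ} {u : En n → ℝ} (h : IsTest u) :
    ∃ L, 0 < L ∧ ∀ x y, |u y - u x - fderiv ℝ u x (y - x)| ≤ L * ‖y - x‖ ^ 2 := by
  obtain ⟨L, hL0, hL⟩ := h.flip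
  refine ⟨L, hL0, fun x y => ?_⟩
  have := (convex_closedBall x ‖y - x‖).norm_image_sub_le_of_norm_fderiv_le' (𝕜 := ℝ) (f := u)
    (φ := fderiv ℝ u x) (C := L * ‖y - x‖) (x := x) (y := y)
    (fun z _ => h.c1.differentiable one_ne_zero z) (fun z hz => (hL x z).trans ?_)
    (by simp) (by simp [dist_eq_norm])
  · rw [pow_two, ← mul_assoc]; exact this
  · have : ‖z - x‖ ≤ ‖y - x‖ := by simpa [dist_eq_norm] using hz
    gcongr

lemma IsTest.second {n : ℕ} {u : En n → ℝ} (h : IsTest u) :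
    ∃ M, 0 < M ∧ ∀ y v, |u (y - v) + u (y + v) - 2 * u y| ≤ M * min (‖v‖ ^ 2) 1 := by
  obtain ⟨L, hL0, hL⟩ := h.taylor
  obtain ⟨M, hM0, hM⟩ := h.bdd
  refine ⟨max (2 * L) (4 * M), by positivity, fun y v => ?_⟩
  rw [mul_min_of_nonneg _ _ (by positivity)]
  refine le_min ?_ ?_
  · have h1 := hL y (y - v)
    have h2 := hL y (y + v)
    simp only [sub_sub_cancel_left, add_sub_cancel_left, norm_neg, map_neg] at h1 h2
    rw [abs_le] at *
    have : 2 * L * ‖v‖ ^ 2 ≤ max (2 * L) (4 * M) * ‖v‖ ^ 2 := by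
      gcongr; exact le_max_left _ _
    constructor <;> linarith [h1.1, h1.2, h2.1, h2.2]
  · have h1 := hM y
    have h2 := hM (y - v)
    have h3 := hM (y + v)
    have := le_max_right (2 * L) (4 * M)
    rw [abs_le] at *
    constructor <;> linarith [h1.1, h1.2, h2.1, h2.2, h3.1, h3.2]

lemma IsTest.first {n : ℕ} {u : En n → ℝ} (h : IsTest u) :
    ∃ M, 0 < M ∧ ∀ x y, |u y - u x| ^ 2 ≤ M * min (‖x - y‖ ^ 2) 1 := by
  obtain ⟨L, hL0, hL⟩ := h.lip
  obtain ⟨M, hM0, hM⟩ := h.bdd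
  refine ⟨max (L ^ 2) ((2 * M) ^ 2), by positivity, fun x y => ?_⟩
  rw [mul_min_of_nonneg _ _ (by positivity)]
  refine le_min ?_ ?_
  · calc |u y - u x| ^ 2 ≤ (L * ‖y - x‖) ^ 2 := by gcongr; exact hL x y
      _ = L ^ 2 * ‖x - y‖ ^ 2 := by rw [norm_sub_rev]; ring
      _ ≤ _ := by gcongr; exact le_max_left _ _
  · have : |u y - u x| ≤ 2 * M := by
      have h1 := hM y
      have h2 := hM x
      rw [abs_le] at *
      constructor <;> linarith [h1.1, h1.2, h2.1, h2.2]
    rw [mul_one]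
    refine le_trans ?_ (le_max_right _ _)
    gcongr

/-- dominating kernel -/
def Kd {n : ℕ} (s : ℝ) (v : En n) : ℝ := ‖v‖ ^ (-((n : ℝ) + 2 * s)) * min (‖v‖ ^ 2) 1

lemma Kd_int {n : ℕ} (hn : 1 ≤ n) {s : ℝ} (hs0 : 0 < s) (hs1 : s < 1) :
    Integrable (fun v : En n => Kd s v) := by
  have : Nontrivial (En n) := by
    have : NeZero n := ⟨by omega⟩
    infer_instance
  unfold Kd
  rw [integrable_fun_norm_addHaar (E := En n) volume
    (f := fun r => r ^ (-((n : ℝ) + 2 * s)) * min (r ^ 2) 1)]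
  simp only [finrank_euclideanSpace, Fintype.card_fin, smul_eq_mul]
  rw [← Ioc_union_Ioi_eq_Ioi (zero_le_one' ℝ)]
  have hnn : ((n - 1 : ℕ) : ℝ) = n - 1 := by push_cast [Nat.cast_sub hn]; ring
  refine IntegrableOn.union ?_ ?_
  · have h1 : IntegrableOn (fun r : ℝ => r ^ (1 - 2 * s)) (Ioc 0 1) := by
      have := intervalIntegral.intervalIntegrable_rpow' (a := 0) (b := 1) (r := 1 - 2 * s)
        (by linarith)
      rwa [intervalIntegrable_iff_integrableOn_Ioc_of_le zero_le_one] at this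
    refine h1.congr_fun (fun r hr => ?_) measurableSet_Ioc
    have hr0 : 0 < r := hr.1
    have : r ^ 2 ≤ 1 := pow_le_one₀ hr0.le hr.2
    simp only
    rw [min_eq_left this, ← Real.rpow_natCast, ← Real.rpow_natCast, ← Real.rpow_add hr0,
      ← Real.rpow_add hr0, hnn]
    congr 1; push_cast; ring
  · have h1 : IntegrableOn (fun r : ℝ => r ^ (-1 - 2 * s)) (Ioi 1) :=
      integrableOn_Ioi_rpow_of_lt (by linarith) one_pos
    refine h1.congr_fun (fun r hr => ?_) measurableSet_Ioi
    have hr1 : 1 < r := hr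
    have hr0 : 0 < r := by linarith
    have : 1 ≤ r ^ 2 := one_le_pow₀ hr1.le
    simp only
    rw [min_eq_right this, ← Real.rpow_natCast, mul_one,
      ← Real.rpow_add hr0, hnn]
    congr 1; ring

lemma Kd_nonneg {n : ℕ} (s : ℝ) (v : En n) : 0 ≤ Kd s v := by unfold Kd; positivity

lemma even_bound {n : ℕ} (hn : 1 ≤ n) {s : ℝ} (hs0 : 0 < s) (hs1 : s < 1) {u : En n → ℝ}
    (h : IsTest u) :
    ∃ C, 0 < C ∧ ∀ (k : En n → ℝ) (A : ℝ), Integrable k → (∀ v, k (-v) = k v) →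
      (∀ v, v ≠ 0 → |k v| ≤ A * ‖v‖ ^ (-((n : ℝ) + 2 * s))) →
      ∀ y, |cv k u y - u y * ∫ v, k v| ≤ A * C := by
  obtain ⟨M, hM0, hM⟩ := h.second
  obtain ⟨B, hB0, hB⟩ := h.bdd
  have hI0 : 0 ≤ ∫ v : En n, Kd s v := integral_nonneg fun v => Kd_nonneg s v
  refine ⟨M * (1 + ∫ v : En n, Kd s v), by positivity, fun k A hk hev hA y => ?_⟩
  have hA0 : 0 ≤ A := by
    have : NeZero n := ⟨by omega⟩
    obtain ⟨v, hv⟩ := exists_ne (0 : En n)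
    have h1 := (abs_nonneg _).trans (hA v hv)
    have : 0 < ‖v‖ ^ (-((n : ℝ) + 2 * s)) := by positivity
    exact nonneg_of_mul_nonneg_left h1 this
  have i1 := cv_int hk h.1.continuous hB y
  have e1 : cv k u y = ∫ v, k v * u (y + v) := by
    unfold cv
    rw [← integral_neg_eq_self]
    simp [hev]
  have i2 : Integrable (fun v => k v * u (y + v)) := by
    have := i1.comp_neg
    simpa [hev] using this
  have e2 : 2 * (cv k u y - u y * ∫ v, k v) = ∫ v, k v * (u (y - v) + u (y + v) - 2 * u y) := by
    have : ∀ v, k v * (u (y - v) + u (y + v) - 2 * u y) =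
      k v * u (y - v) + k v * u (y + v) - 2 * u y * k v := fun v => by ring
    simp_rw [this]
    have i12 : Integrable (fun v => k v * u (y - v) + k v * u (y + v)) := i1.add i2
    rw [integral_sub i12 (hk.const_mul _), integral_add i1 i2, integral_const_mul, ← e1]
    unfold cv; ring
  have e3 : |∫ v, k v * (u (y - v) + u (y + v) - 2 * u y)| ≤ A * M * ∫ v : En n, Kd s v := by
    rw [← integral_const_mul]
    refine abs_int_le ((Kd_int hn hs0 hs1).const_mul _) (fun v => ?_)
    rw [abs_mul]
    by_cases hv : v = 0
    · subst hv
      have : u (y - 0) + u (y + 0) - 2 * u y = 0 := by simp; ring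
      rw [this]
      simp only [abs_zero, mul_zero]
      have := Kd_nonneg s (0 : En n)
      positivity
    · calc _ ≤ (A * ‖v‖ ^ (-((n : ℝ) + 2 * s))) * (M * min (‖v‖ ^ 2) 1) := by
            gcongr
            · exact hA v hv
            · exact hM y v
        _ = A * M * Kd s v := by unfold Kd; ring
  have e4 : 2 * |cv k u y - u y * ∫ v, k v| ≤ A * M * ∫ v : En n, Kd s v := by
    rw [← e2, abs_mul] at e3; simpa using e3
  have : 0 ≤ A * M := by positivity
  nlinarith [abs_nonneg (cv k u y - u y * ∫ v, k v)]

/-- exponent -/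
def aa (n : ℕ) (s : ℝ) : ℝ := ((n : ℝ) + 2 * s) / 2

lemma aa_pos (n : ℕ) {s : ℝ} (hs0 : 0 < s) : 0 < aa n s := by unfold aa; positivity

lemma aa_gt (n : ℕ) {s : ℝ} (hs0 : 0 < s) : (n : ℝ) / 2 < aa n s := by unfold aa; linarith

lemma pns_pos (n : ℕ) {s : ℝ} (hs0 : 0 < s) : 0 < pns n s := by
  unfold pns
  have h1 := Real.Gamma_pos_of_pos hs0
  have h2 : 0 < Real.Gamma ((n : ℝ) / 2 + s) := Real.Gamma_pos_of_pos (by positivity)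
  have := Real.pi_pos
  positivity

/-- Poisson kernel -/
def pk {n : ℕ} (s z : ℝ) (v : En n) : ℝ := pns n s * z ^ (2 * s) * kk (aa n s) z v

/-- conormal derivative of the Poisson kernel -/
def ek {n : ℕ} (s z : ℝ) (v : En n) : ℝ :=
  pns n s * (2 * s * kk (aa n s) z v - 2 * aa n s * z ^ 2 * kk (aa n s + 1) z v)

/-- derivative of ek -/
def ek1 {n : ℕ} (s z : ℝ) (v : En n) : ℝ :=
  pns n s * z * (-4 * aa n s * (s + 1) * kk (aa n s + 1) z v
    + 4 * aa n s * (aa n s + 1) * z ^ 2 * kk (aa n s + 1 + 1) z v)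

lemma Pker_eq (n : ℕ) (s z : ℝ) : Pker n s z = pk s z := by
  ext v; unfold Pker pk kk aa; congr 2; ring

section
variable {n : ℕ} {s z : ℝ}

lemma z2kk (b : ℝ) (hz : 0 < z) (v : En n) : z ^ 2 * kk (b + 1) z v ≤ kk b z v := by
  rw [← kk_succ b hz v]
  have := (kk_pos (b + 1) hz v).le
  gcongr
  have := sq_nonneg ‖v‖
  linarith

lemma kk_mono {b : ℝ} (hb : 0 ≤ b) {z' : ℝ} (hz : 0 < z) (h : z ≤ z') (v : En n) :
    kk b z' v ≤ kk b z v := by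
  unfold kk
  exact Real.rpow_le_rpow_of_nonpos (rho_pos hz v) (by gcongr) (by linarith)

lemma kk_le_norm (hs0 : 0 < s) (z : ℝ) (v : En n) (hv : v ≠ 0) :
    kk (aa n s) z v ≤ ‖v‖ ^ (-((n : ℝ) + 2 * s)) := by
  unfold kk
  have hv' : 0 < ‖v‖ := norm_pos_iff.2 hv
  have : ‖v‖ ^ (-((n : ℝ) + 2 * s)) = (‖v‖ ^ 2) ^ (-aa n s) := by
    rw [← Real.rpow_natCast, ← Real.rpow_mul hv'.le]
    unfold aa; congr 1; push_cast; ring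
  rw [this]
  exact Real.rpow_le_rpow_of_nonpos (by positivity) (by nlinarith [sq_nonneg z])
    (by have := aa_pos n hs0; linarith)

lemma pk_pos (hs0 : 0 < s) (hz : 0 < z) (v : En n) : 0 < pk s z v := by
  unfold pk
  have := pns_pos n hs0
  have := kk_pos (aa n s) hz v
  positivity

lemma pk_int (hs0 : 0 < s) (hz : 0 < z) : Integrable (pk (n := n) s z) :=
  (kk_integrable (aa_gt n hs0) hz).const_mul _

lemma kk1_int (hs0 : 0 < s) (hz : 0 < z) : Integrable (fun v : En n => kk (aa n s + 1) z v) :=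
  kk_integrable (by linarith [aa_gt n hs0]) hz

lemma kk2_int (hs0 : 0 < s) (hz : 0 < z) : Integrable (fun v : En n => kk (aa n s + 1 + 1) z v) :=
  kk_integrable (by linarith [aa_gt n hs0]) hz

lemma ek_int (hs0 : 0 < s) (hz : 0 < z) : Integrable (ek (n := n) s z) :=
  (((kk_integrable (aa_gt n hs0) hz).const_mul _).sub ((kk1_int hs0 hz).const_mul _)).const_mul _

lemma ek1_int (hs0 : 0 < s) (hz : 0 < z) : Integrable (ek1 (n := n) s z) :=
  (((kk1_int hs0 hz).const_mul _).add ((kk2_int hs0 hz).const_mul _)).const_mul _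

lemma pk_integral (hs0 : 0 < s) (hz : 0 < z) : ∫ v : En n, pk s z v = 1 := by
  unfold pk
  rw [integral_const_mul, kk_integral (aa_gt n hs0) hz]
  have h1 : aa n s - n / 2 = s := by unfold aa; ring
  have h2 : (n : ℝ) / 2 - aa n s = - s := by unfold aa; ring
  have h3 : (n : ℝ) / 2 + s = aa n s := by unfold aa; ring
  rw [h1, h2]
  unfold pns
  rw [h3, ← Real.rpow_natCast z 2, ← Real.rpow_mul hz.le]
  have e : z ^ (((2 : ℕ) : ℝ) * -s) = (z ^ (2 * s))⁻¹ := by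
    rw [← Real.rpow_neg hz.le]; congr 1; push_cast; ring
  rw [e]
  have := (Real.Gamma_pos_of_pos hs0).ne'
  have := (Real.Gamma_pos_of_pos (aa_pos n hs0)).ne'
  have : z ^ (2 * s) ≠ 0 := by positivity
  have : Real.pi ^ ((n : ℝ) / 2) ≠ 0 := by have := Real.pi_pos; positivity
  field_simp

lemma ek_integral (hs0 : 0 < s) (hz : 0 < z) : ∫ v : En n, ek s z v = 0 := by
  unfold ek
  rw [integral_const_mul, integral_sub ((kk_integrable (aa_gt n hs0) hz).const_mul _)
    ((kk1_int hs0 hz).const_mul _), integral_const_mul, integral_const_mul,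
    kk_integral (aa_gt n hs0) hz, kk_integral (by linarith [aa_gt n hs0]) hz]
  have h1 : aa n s - n / 2 = s := by unfold aa; ring
  have h1' : aa n s + 1 - n / 2 = s + 1 := by unfold aa; ring
  have h2 : (n : ℝ) / 2 - aa n s = - s := by unfold aa; ring
  have h2' : (n : ℝ) / 2 - (aa n s + 1) = - s - 1:= by unfold aa; ring
  have ha := aa_pos n hs0
  rw [h1, h2, h1', h2', Real.Gamma_add_one hs0.ne', Real.Gamma_add_one ha.ne',
    Real.rpow_sub_one (by positivity)]
  have := (Real.Gamma_pos_of_pos ha).ne'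
  field_simp
  ring

lemma pk_neg (v : En n) : pk s z (-v) = pk s z v := by simp [pk, kk_neg]
lemma ek_neg (v : En n) : ek s z (-v) = ek s z v := by simp [ek, kk_neg]
lemma ek1_neg (v : En n) : ek1 s z (-v) = ek1 s z v := by simp [ek1, kk_neg]

/-- constant -/
def ce (n : ℕ) (s : ℝ) : ℝ := pns n s * (2 * s + 2 * aa n s)

lemma ce_pos (hs0 : 0 < s) : 0 < ce n s := by
  unfold ce
  have := pns_pos n hs0
  have := aa_pos n hs0
  positivity

lemma ek_le (hs0 : 0 < s) (hz : 0 < z) (v : En n) : |ek s z v| ≤ ce n s * kk (aa n s) z v := by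
  have h1 := z2kk (aa n s) hz v
  have h2 := kk_pos (aa n s) hz v
  have h3 := kk_pos (aa n s + 1) hz v
  have ha := aa_pos n hs0
  have hp := pns_pos n hs0
  unfold ek ce
  rw [abs_mul, abs_of_pos hp, mul_assoc (pns n s)]
  refine mul_le_mul_of_nonneg_left ?_ hp.le
  have h4 : 0 ≤ 2 * s * kk (aa n s) z v := by positivity
  have h5 : 0 ≤ 2 * aa n s * z ^ 2 * kk (aa n s + 1) z v := by positivity
  have h6 : 2 * aa n s * z ^ 2 * kk (aa n s + 1) z v ≤ 2 * aa n s * kk (aa n s) z v := by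
    rw [mul_assoc]; gcongr
  rw [abs_le]
  constructor <;> nlinarith

lemma ek_le_pk (hs0 : 0 < s) (hz : 0 < z) (v : En n) :
    |ek s z v| ≤ (2 * s + 2 * aa n s) * z ^ (-(2 * s)) * pk s z v := by
  refine (ek_le hs0 hz v).trans (le_of_eq ?_)
  unfold ce pk
  rw [Real.rpow_neg hz.le]
  have : z ^ (2 * s) ≠ 0 := by positivity
  field_simp

/-- constant -/
def ce1 (n : ℕ) (s : ℝ) : ℝ := pns n s * (4 * aa n s * (s + 1) + 4 * aa n s * (aa n s + 1))

lemma ce1_pos (hs0 : 0 < s) : 0 < ce1 n s := by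
  unfold ce1
  have := pns_pos n hs0
  have := aa_pos n hs0
  positivity

lemma ek1_le (hs0 : 0 < s) (hz : 0 < z) (v : En n) :
    |ek1 s z v| ≤ ce1 n s * z * kk (aa n s + 1) z v := by
  have h1 := z2kk (aa n s + 1) hz v
  have h2 := kk_pos (aa n s + 1) hz v
  have h3 := kk_pos (aa n s + 1 + 1) hz v
  have ha := aa_pos n hs0
  have hp := pns_pos n hs0
  have hpz : 0 < pns n s * z := by positivity
  unfold ek1 ce1
  rw [abs_mul, abs_of_pos hpz, show pns n s * (4 * aa n s * (s + 1) + 4 * aa n s * (aa n s + 1)) * z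
    * kk (aa n s + 1) z v = (pns n s * z) * ((4 * aa n s * (s + 1) + 4 * aa n s * (aa n s + 1))
    * kk (aa n s + 1) z v) by ring]
  refine mul_le_mul_of_nonneg_left ?_ hpz.le
  have h4 : 0 ≤ 4 * aa n s * (s + 1) * kk (aa n s + 1) z v := by positivity
  have h5 : 0 ≤ 4 * aa n s * (aa n s + 1) * z ^ 2 * kk (aa n s + 1 + 1) z v := by positivity
  have h6 : 4 * aa n s * (aa n s + 1) * z ^ 2 * kk (aa n s + 1 + 1) z v
      ≤ 4 * aa n s * (aa n s + 1) * kk (aa n s + 1) z v := by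
    rw [mul_assoc]; gcongr
  rw [abs_le]
  constructor <;> nlinarith

lemma pk_deriv (hz : 0 < z) (v : En n) :
    HasDerivAt (fun z => pk s z v) (z ^ (2 * s - 1) * ek s z v) z := by
  unfold pk
  have h1 := ((Real.hasDerivAt_rpow_const (p := 2 * s) (Or.inl hz.ne')).const_mul
    (pns n s)).mul (kk_hasDerivAt (aa n s) hz v)
  refine h1.congr_deriv ?_
  unfold ek
  have : z ^ (2 * s) = z ^ (2 * s - 1) * z := by
    rw [← Real.rpow_add_one hz.ne']; congr 1; ring
  rw [this]
  ring

lemma ek_deriv (hz : 0 < z) (v : En n) :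
    HasDerivAt (fun z => ek s z v) (ek1 s z v) z := by
  unfold ek
  have h1 := (((kk_hasDerivAt (aa n s) hz v).const_mul (2 * s)).sub
    ((((hasDerivAt_pow 2 z).const_mul (2 * aa n s)).mul
      (kk_hasDerivAt (aa n s + 1) hz v)))).const_mul (pns n s)
  refine h1.congr_deriv ?_
  unfold ek1
  push_cast
  ring

lemma cv_kk_deriv {u : En n → ℝ} (h : IsTest u) {b : ℝ} (hb : (n : ℝ) / 2 < b) (hz : 0 < z)
    (y : En n) :
    HasDerivAt (fun z => cv (kk b z) u y) (-2 * b * z * cv (kk (b + 1) z) u y) z := by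
  obtain ⟨M, hM0, hM⟩ := h.bdd
  have hb0 : 0 ≤ b := le_trans (by positivity) hb.le
  have hb1 : (n : ℝ) / 2 < b + 1 := by linarith
  have hball : ∀ t ∈ Metric.ball z (z / 2), z / 2 < t ∧ t < 2 * z := by
    intro t ht
    rw [Metric.mem_ball, Real.dist_eq, abs_lt] at ht
    constructor <;> linarith [ht.1, ht.2]
  have := (hasDerivAt_integral_of_dominated_loc_of_deriv_le (μ := (volume : Measure (En n)))
    (F := fun t v => kk b t v * u (y - v)) (x₀ := z) (s := Metric.ball z (z / 2))
    (F' := fun t v => (-2 * b * t * kk (b + 1) t v) * u (y - v))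
    (bound := fun v => 2 * b * (2 * z) * M * kk (b + 1) (z / 2) v)
    (Metric.ball_mem_nhds _ (by positivity)) ?_ (cv_int (kk_integrable hb hz) h.1.continuous hM y)
    ?_ ?_ ((kk_integrable hb1 (by positivity)).const_mul _) ?_).2
  · refine this.congr_deriv ?_
    unfold cv
    rw [← integral_const_mul]
    congr 1; ext v; ring
  · filter_upwards [Metric.ball_mem_nhds z (half_pos hz)] with t ht
    have ht0 : 0 < t := by linarith [(hball t ht).1]
    exact (cv_int (kk_integrable hb ht0) h.1.continuous hM y).aestronglyMeasurable
  · exact (cv_int ((kk_integrable hb1 hz).const_mul _) h.1.continuous hM y).aestronglyMeasurable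
  · refine Eventually.of_forall fun v t ht => ?_
    obtain ⟨h1, h2⟩ := hball t ht
    have ht0 : 0 < t := by linarith
    have k0 := kk_pos (b + 1) ht0 v
    rw [norm_mul, Real.norm_eq_abs, Real.norm_eq_abs, show -2 * b * t * kk (b + 1) t v =
      -(2 * b * t * kk (b + 1) t v) by ring, abs_neg, abs_of_nonneg (by positivity)]
    calc _ ≤ (2 * b * (2 * z) * kk (b + 1) (z / 2) v) * M := by
          have k1 := kk_mono (b := b + 1) (by linarith) (by positivity) h1.le v
          have k2 := hM (y - v)
          have k3 := k0.le.trans k1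
          gcongr
      _ = _ := by ring
  · refine Eventually.of_forall fun v t ht => ?_
    have ht0 : 0 < t := by linarith [(hball t ht).1]
    exact (kk_hasDerivAt b ht0 v).mul_const _

lemma cv_const_mul (c : ℝ) (k f : En n → ℝ) (y : En n) :
    cv (fun v => c * k v) f y = c * cv k f y := by
  unfold cv; rw [← integral_const_mul]; congr 1; ext v; ring

lemma cv_pk (u : En n → ℝ) (y : En n) :
    cv (pk s z) u y = pns n s * z ^ (2 * s) * cv (kk (aa n s) z) u y := cv_const_mul _ _ _ _

lemma cv_ek (hs0 : 0 < s) {u : En n → ℝ} (h : IsTest u) (hz : 0 < z) (y : En n) :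
    cv (ek s z) u y = pns n s * (2 * s * cv (kk (aa n s) z) u y
      - 2 * aa n s * z ^ 2 * cv (kk (aa n s + 1) z) u y) := by
  obtain ⟨M, hM0, hM⟩ := h.bdd
  have i1 := cv_int (kk_integrable (aa_gt n hs0) hz) h.1.continuous hM y
  have i2 := cv_int (kk1_int hs0 hz) h.1.continuous hM y
  unfold cv
  rw [← integral_const_mul, ← integral_const_mul (2 * aa n s * z ^ 2),
    ← integral_sub (i1.const_mul _) (i2.const_mul _), ← integral_const_mul]
  congr 1; ext v; unfold ek; ring

lemma cv_ek1 (hs0 : 0 < s) {u : En n → ℝ} (h : IsTest u) (hz : 0 < z) (y : En n) :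
    cv (ek1 s z) u y = pns n s * z * (-4 * aa n s * (s + 1) * cv (kk (aa n s + 1) z) u y
      + 4 * aa n s * (aa n s + 1) * z ^ 2 * cv (kk (aa n s + 1 + 1) z) u y) := by
  obtain ⟨M, hM0, hM⟩ := h.bdd
  have i1 := cv_int (kk1_int hs0 hz) h.1.continuous hM y
  have i2 := cv_int (kk2_int hs0 hz) h.1.continuous hM y
  unfold cv
  rw [← integral_const_mul, ← integral_const_mul (4 * aa n s * (aa n s + 1) * z ^ 2),
    ← integral_add (i1.const_mul _) (i2.const_mul _), ← integral_const_mul]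
  congr 1; ext v; unfold ek1; ring

lemma cv_pk_deriv (hs0 : 0 < s) {u : En n → ℝ} (h : IsTest u) (hz : 0 < z) (y : En n) :
    HasDerivAt (fun z => cv (pk s z) u y) (z ^ (2 * s - 1) * cv (ek s z) u y) z := by
  simp_rw [cv_pk]
  have h1 := ((Real.hasDerivAt_rpow_const (p := 2 * s) (Or.inl hz.ne')).const_mul
    (pns n s)).mul (cv_kk_deriv h (aa_gt n hs0) hz y)
  refine h1.congr_deriv ?_
  rw [cv_ek hs0 h hz]
  have : z ^ (2 * s) = z ^ (2 * s - 1) * z := by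
    rw [← Real.rpow_add_one hz.ne']; congr 1; ring
  rw [this]
  ring

lemma cv_ek_deriv (hs0 : 0 < s) {u : En n → ℝ} (h : IsTest u) (hz : 0 < z) (y : En n) :
    HasDerivAt (fun z => cv (ek s z) u y) (cv (ek1 s z) u y) z := by
  have h1 := (((cv_kk_deriv h (aa_gt n hs0) hz y).const_mul (2 * s)).sub
    ((((hasDerivAt_pow 2 z).const_mul (2 * aa n s)).mul
      (cv_kk_deriv h (b := aa n s + 1) (by linarith [aa_gt n hs0]) hz y)))).const_mul (pns n s)
  refine (h1.congr_deriv ?_).congr_of_eventuallyEq ?_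
  · rw [cv_ek1 hs0 h hz]
    push_cast
    ring
  · filter_upwards [lt_mem_nhds hz] with t ht
    rw [cv_ek hs0 h ht]
    rfl
end

section
variable {n : ℕ} {s z : ℝ} {u : En n → ℝ}

/-- integration by parts for line derivatives, real-valued -/
lemma ibp_line {f f' g g' : En n → ℝ} (e : En n)
    (h1 : Integrable (fun v => f' v * g v)) (h2 : Integrable (fun v => f v * g' v))
    (h3 : Integrable (fun v => f v * g v))
    (hf : ∀ v, HasLineDerivAt ℝ f (f' v) v e) (hg : ∀ v, HasLineDerivAt ℝ g (g' v) v e) :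
    ∫ v, f v * g' v = - ∫ v, f' v * g v := by
  have := integral_bilinear_hasLineDerivAt_right_eq_neg_left_of_integrable
    (μ := (volume : Measure (En n))) (B := ContinuousLinearMap.mul ℝ ℝ)
    (f := f) (f' := f') (g := g) (g' := g') (v := e) (by simpa using h1) (by simpa using h2)
    (by simpa using h3) (fun v _ => hf v) (fun v _ => hg v)
  simpa using this

lemma ibp_zero {f f' : En n → ℝ} (e : En n) (h1 : Integrable f') (h3 : Integrable f)
    (hf : ∀ v, HasLineDerivAt ℝ f (f' v) v e) : ∫ v, f' v = 0 := by
  have := ibp_line (f := f) (f' := f') (g := fun _ => 1) (g' := fun _ => 0) e (by simpa using h1)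
    (by simp) (by simpa using h3) hf (fun v => by
      simpa [HasLineDerivAt] using hasDerivAt_const (0:ℝ) (1:ℝ))
  simp at this
  linarith

lemma int_test {g w : En n → ℝ} (hg : Continuous g) (hw : IsTest w) (y : En n) :
    Integrable (fun v => g v * w (y - v)) := by
  have hc : HasCompactSupport (fun v => w (y - v)) := by
    have := hw.2.comp_homeomorph (Homeomorph.subLeft y)
    exact this
  refine Continuous.integrable_of_hasCompactSupport ?_ hc.mul_left
  exact hg.mul (hw.1.continuous.comp (by fun_prop))

lemma line_refl (hu : IsTest u) (y v : En n) (i : Fin n) :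
    HasLineDerivAt ℝ (fun v => u (y - v)) (-(pd i u (y - v))) v (EuclideanSpace.single i 1) := by
  have h1 : HasFDerivAt u (fderiv ℝ u (y - v)) (y - v) :=
    (hu.c1.differentiable one_ne_zero _).hasFDerivAt
  have h2 := h1.comp v ((hasFDerivAt_id v).const_sub y)
  have h3 := h2.hasLineDerivAt (EuclideanSpace.single i (1:ℝ))
  simpa [pd, Function.comp_def] using! h3

lemma coord_cont (i : Fin n) : Continuous (fun v : En n => v i) := by fun_prop

lemma lap_one (hu : IsTest u) (b : ℝ) (hz : 0 < z) (y : En n) (i : Fin n) :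
    cv (kk b z) (pd i (pd i u)) y =
      ∫ v, (-2 * b * kk (b + 1) z v + 4 * b * (b + 1) * (v i) ^ 2 * kk (b + 1 + 1) z v)
        * u (y - v) := by
  have k0 := kk_cont (n := n) b hz
  have k1 := kk_cont (n := n) (b + 1) hz
  have k2 := kk_cont (n := n) (b + 1 + 1) hz
  have kc := coord_cont i
  have c1 : Continuous (fun v : En n => -2 * b * v i * kk (b + 1) z v) := by fun_prop
  have c2 : Continuous (fun v : En n => -2 * b * kk (b + 1) z v
    + 4 * b * (b + 1) * (v i) ^ 2 * kk (b + 1 + 1) z v) := by fun_prop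
  have s1 := ibp_line (EuclideanSpace.single i (1:ℝ)) (f := kk b z)
    (f' := fun v => -2 * b * v i * kk (b + 1) z v)
    (g := fun v => pd i u (y - v)) (g' := fun v => -(pd i (pd i u) (y - v)))
    (int_test c1 (hu.pd i) y) (by simpa using (int_test k0 ((hu.pd i).pd i) y).neg)
    (int_test k0 (hu.pd i) y) (fun v => kk_line b hz v i) (fun v => line_refl (hu.pd i) y v i)
  have s2 := ibp_line (EuclideanSpace.single i (1:ℝ)) (f := fun v => -2 * b * v i * kk (b + 1) z v)
    (f' := fun v => -2 * b * kk (b + 1) z v + 4 * b * (b + 1) * (v i) ^ 2 * kk (b + 1 + 1) z v)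
    (g := fun v => u (y - v)) (g' := fun v => -(pd i u (y - v)))
    (int_test c2 hu y) (by simpa using (int_test c1 (hu.pd i) y).neg)
    (int_test c1 hu y) ?_ (fun v => line_refl hu y v i)
  · simp only [mul_neg, integral_neg, neg_inj] at s1 s2
    unfold cv
    rw [s1, s2]
  · intro v
    have h1 := ((coord_line v i).const_mul (-2 * b)).mul (kk_line (b + 1) hz v i)
    refine HasDerivAt.congr_deriv h1 ?_
    simp
    ring

lemma lap_rel (hs0 : 0 < s) (hu : IsTest u) (hz : 0 < z) (y : En n) :
    cv (ek1 s z) u y = - z ^ (1 - 2 * s) * ∑ i, cv (pk s z) (pd i (pd i u)) y := by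
  simp_rw [cv_pk, lap_one hu _ hz]
  rw [← Finset.mul_sum, ← integral_finsetSum]
  · rw [show -z ^ (1 - 2 * s) * (pns n s * z ^ (2 * s) * ∫ (a : En n), ∑ i : Fin n,
      (-2 * aa n s * kk (aa n s + 1) z a + 4 * aa n s * (aa n s + 1) * (a i) ^ 2
        * kk (aa n s + 1 + 1) z a) * u (y - a)) = (-pns n s * (z ^ (1 - 2 * s) * z ^ (2 * s))) *
        ∫ (a : En n), ∑ i : Fin n,
      (-2 * aa n s * kk (aa n s + 1) z a + 4 * aa n s * (aa n s + 1) * (a i) ^ 2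
        * kk (aa n s + 1 + 1) z a) * u (y - a) by ring, ← Real.rpow_add hz]
    rw [show 1 - 2 * s + 2 * s = 1 by ring, Real.rpow_one, ← integral_const_mul]
    unfold cv
    congr 1; ext v
    have hs : ∑ i, 4 * aa n s * (aa n s + 1) * (v i) ^ 2 * kk (aa n s + 1 + 1) z v
      = 4 * aa n s * (aa n s + 1) * ‖v‖ ^ 2 * kk (aa n s + 1 + 1) z v := by
      rw [EuclideanSpace.real_norm_sq_eq, Finset.mul_sum, Finset.sum_mul]
    rw [← Finset.sum_mul, Finset.sum_add_distrib, hs]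
    have h1 := kk_succ (aa n s + 1) hz v
    have h2 : ‖v‖ ^ 2 * kk (aa n s + 1 + 1) z v
      = kk (aa n s + 1) z v - z ^ 2 * kk (aa n s + 1 + 1) z v := by rw [← h1]; ring
    rw [mul_assoc (4 * aa n s * (aa n s + 1)), h2]
    simp only [Finset.sum_const, Finset.card_univ, Fintype.card_fin, nsmul_eq_mul]
    have h3 : s = aa n s - n / 2 := by unfold aa; ring
    unfold ek1
    generalize kk (aa n s + 1) z v = A
    generalize kk (aa n s + 1 + 1) z v = B
    have h4 : (s + 1 : ℝ) = aa n s - n / 2 + 1 := by linarith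
    rw [h4]
    ring
  · intro i _
    have k1 := kk_cont (n := n) (aa n s + 1) hz
    have k2 := kk_cont (n := n) (aa n s + 1 + 1) hz
    have kc := coord_cont i
    exact int_test (by fun_prop) hu y

lemma U_line (hs0 : 0 < s) (hu : IsTest u) (hz : 0 < z) (y : En n) (i : Fin n) :
    HasLineDerivAt ℝ (cv (pk s z) u) (cv (pk s z) (pd i u) y) y (EuclideanSpace.single i 1) := by
  obtain ⟨M, _, hM⟩ := hu.bdd
  obtain ⟨M', _, hM'⟩ := hu.fbdd
  have h := cv_fderiv (pk_int hs0 hz) hu.c1 hM hM' y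
  have h1 := h.1.hasLineDerivAt (EuclideanSpace.single i (1:ℝ))
  rwa [h.2] at h1

lemma U_pd (hs0 : 0 < s) (hu : IsTest u) (hz : 0 < z) (y : En n) (i : Fin n) :
    pd i (cv (pk s z) u) y = cv (pk s z) (pd i u) y := by
  obtain ⟨M, _, hM⟩ := hu.bdd
  obtain ⟨M', _, hM'⟩ := hu.fbdd
  have h := cv_fderiv (pk_int hs0 hz) hu.c1 hM hM' y
  rw [pd, h.1.fderiv, h.2]
  rfl

lemma pk_abs_integral (hs0 : 0 < s) (hz : 0 < z) : ∫ v : En n, |pk s z v| = 1 := by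
  rw [← pk_integral (n := n) hs0 hz]
  congr 1; ext v; exact abs_of_pos (pk_pos hs0 hz v)

lemma U_bound (hs0 : 0 < s) (hz : 0 < z) {M : ℝ} (hM : ∀ y, |u y| ≤ M) (y : En n) :
    |cv (pk s z) u y| ≤ M := by
  have := cv_bound (pk_int hs0 hz) hM y
  rwa [pk_abs_integral hs0 hz, mul_one] at this

lemma ek_abs_integral (hs0 : 0 < s) (hz : 0 < z) :
    ∫ v : En n, |ek s z v| ≤ (2 * s + 2 * aa n s) * z ^ (-(2 * s)) := by
  calc _ ≤ ∫ v : En n, (2 * s + 2 * aa n s) * z ^ (-(2 * s)) * pk s z v :=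
        integral_mono (ek_int hs0 hz).abs ((pk_int hs0 hz).const_mul _) (ek_le_pk hs0 hz)
    _ = _ := by rw [integral_const_mul, pk_integral hs0 hz, mul_one]

lemma U_close (hn : 1 ≤ n) (hs0 : 0 < s) (hs1 : s < 1) (hu : IsTest u) :
    ∃ C, 0 < C ∧ ∀ z, 0 < z → ∀ y, |cv (pk s z) u y - u y| ≤ C * z ^ (2 * s) ∧
      |cv (ek s z) u y| ≤ C := by
  obtain ⟨C, hC0, hC⟩ := even_bound hn hs0 hs1 hu
  have hp := pns_pos n hs0
  have hce := ce_pos (n := n) hs0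
  refine ⟨max (pns n s * C) (ce n s * C), by positivity, fun z hz y => ⟨?_, ?_⟩⟩
  · have := hC (pk s z) (pns n s * z ^ (2 * s)) (pk_int hs0 hz) pk_neg (fun v hv => ?_) y
    · rw [pk_integral hs0 hz, mul_one] at this
      calc _ ≤ _ := this
        _ = (pns n s * C) * z ^ (2 * s) := by ring
        _ ≤ _ := by gcongr; exact le_max_left _ _
    · rw [abs_of_pos (pk_pos hs0 hz v)]
      unfold pk
      have := kk_le_norm hs0 z v hv
      gcongr
  · have := hC (ek s z) (ce n s) (ek_int hs0 hz) ek_neg (fun v hv => ?_) y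
    · rw [ek_integral hs0 hz, mul_zero, sub_zero] at this
      exact this.trans (le_max_right _ _)
    · refine (ek_le hs0 hz v).trans ?_
      have := kk_le_norm hs0 z v hv
      gcongr

lemma pk_shift_int (hs0 : 0 < s) (hz : 0 < z) (x : En n) :
    Integrable (fun y => pk s z (x - y)) := (pk_int hs0 hz).comp_sub_left x

lemma ek_shift_int (hs0 : 0 < s) (hz : 0 < z) (x : En n) :
    Integrable (fun y => ek s z (x - y)) := (ek_int hs0 hz).comp_sub_left x

lemma pk_shift_integral (hs0 : 0 < s) (hz : 0 < z) (x : En n) :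
    ∫ y, pk s z (x - y) = 1 := by
  rw [integral_sub_left_eq_self (fun y => pk s z y) volume x, pk_integral hs0 hz]

lemma pk_diff (hn : 1 ≤ n) (hs0 : 0 < s) (hs1 : s < 1) (hu : IsTest u) :
    ∃ C, 0 < C ∧ ∀ z, 0 < z → ∀ x, Integrable (fun y => pk s z (x - y) * |u y - u x|) ∧
      ∫ y, pk s z (x - y) * |u y - u x| ≤ C * z ^ s := by
  obtain ⟨M, hM0, hM⟩ := hu.first
  obtain ⟨B, hB0, hB⟩ := hu.bdd
  have hp := pns_pos n hs0
  have hI0 : 0 ≤ ∫ v : En n, Kd s v := integral_nonneg fun v => Kd_nonneg s v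
  refine ⟨1 + pns n s * M * ∫ v : En n, Kd s v, by positivity, fun z hz x => ?_⟩
  have i1 : Integrable (fun y => pk s z (x - y) * |u y - u x|) := by
    refine (pk_shift_int hs0 hz x).mul_bdd (c := 2 * B) ?_ ?_
    · have := hu.1.continuous
      exact Continuous.aestronglyMeasurable (by fun_prop)
    · refine Eventually.of_forall fun y => ?_
      rw [Real.norm_eq_abs, abs_abs]
      have h1 := hB y
      have h2 := hB x
      rw [abs_le] at *
      constructor <;> linarith [h1.1, h1.2, h2.1, h2.2]
  refine ⟨i1, ?_⟩
  have i2 : Integrable (fun y : En n => z ^ s * pk s z (x - y) + z ^ s * (pns n s * M) * Kd s (x - y)) :=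
    ((pk_shift_int hs0 hz x).const_mul _).add (((Kd_int hn hs0 hs1).comp_sub_left x).const_mul _)
  calc _ ≤ ∫ y : En n, (z ^ s * pk s z (x - y) + z ^ s * (pns n s * M) * Kd s (x - y)) := by
        refine integral_mono i1 i2 fun y => ?_
        simp only
        by_cases hxy : x - y = 0
        · have : x = y := sub_eq_zero.1 hxy
          subst this
          simp only [sub_self, abs_zero, mul_zero]
          have := Kd_nonneg s (0 : En n)
          have := pk_pos hs0 hz (0 : En n)
          positivity
        · have hzs : 0 < z ^ s := by positivity
          have h1 : |u y - u x| ≤ z ^ s + |u y - u x| ^ 2 * (z ^ s)⁻¹ := by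
            rw [← sub_nonneg]
            have : z ^ s + |u y - u x| ^ 2 * (z ^ s)⁻¹ - |u y - u x| =
              ((z ^ s - |u y - u x| / 2) ^ 2 + 3 / 4 * |u y - u x| ^ 2) * (z ^ s)⁻¹ := by
              field_simp; ring
            rw [this]; positivity
          have hpk := pk_pos hs0 hz (x - y)
          have h2 : pk s z (x - y) ≤ pns n s * z ^ (2 * s) * ‖x - y‖ ^ (-((n : ℝ) + 2 * s)) := by
            have := kk_le_norm hs0 z (x - y) hxy
            unfold pk; gcongr
          have h3 : z ^ (2 * s) = z ^ s * z ^ s := by rw [← Real.rpow_add hz]; congr 1; ring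
          calc pk s z (x - y) * |u y - u x| ≤ pk s z (x - y) * (z ^ s + |u y - u x| ^ 2 * (z ^ s)⁻¹) := by
                gcongr
            _ = z ^ s * pk s z (x - y) + pk s z (x - y) * (|u y - u x| ^ 2 * (z ^ s)⁻¹) := by ring
            _ ≤ z ^ s * pk s z (x - y) + (pns n s * z ^ (2 * s) * ‖x - y‖ ^ (-((n : ℝ) + 2 * s)))
                * ((M * min (‖x - y‖ ^ 2) 1) * (z ^ s)⁻¹) := by
                  gcongr
                  exact hM x y
            _ = _ := by rw [h3]; unfold Kd; field_simp
    _ = _ := by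
      rw [integral_add ((pk_shift_int hs0 hz x).const_mul _)
        (((Kd_int hn hs0 hs1).comp_sub_left x).const_mul _), integral_const_mul,
        pk_shift_integral hs0 hz, integral_const_mul,
        integral_sub_left_eq_self (fun y => Kd s y) volume x]
      ring
end

/-- Convex Bregman-type function data. -/
structure PsiD (f f1 f2 : ℝ → ℝ) (c M K : ℝ) : Prop where
  cM : |c| ≤ M
  K0 : 0 < K
  d1 : ∀ r, HasDerivAt f (f1 r) r
  d2 : ∀ r, HasDerivAt f1 (f2 r) r
  c2 : Continuous f2
  b2 : ∀ r, |r| ≤ M → |f2 r| ≤ K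
  nn : ∀ r, 0 ≤ f2 r
  z0 : f c = 0
  z1 : f1 c = 0

namespace PsiD
variable {f f1 f2 : ℝ → ℝ} {c M K : ℝ}

lemma c0 (h : PsiD f f1 f2 c M K) : Continuous f :=
  continuous_iff_continuousAt.2 fun r => (h.d1 r).continuousAt
lemma c1 (h : PsiD f f1 f2 c M K) : Continuous f1 :=
  continuous_iff_continuousAt.2 fun r => (h.d2 r).continuousAt

lemma b1 (h : PsiD f f1 f2 c M K) (r : ℝ) (hr : |r| ≤ M) : |f1 r| ≤ K * |r - c| := by
  have := (convex_Icc (-M) M).norm_image_sub_le_of_norm_hasDerivWithin_le (f := f1) (f' := f2)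
    (C := K) (x := c) (y := r) (fun x _ => (h.d2 x).hasDerivWithinAt)
    (fun x hx => h.b2 x (abs_le.2 hx)) (abs_le.1 h.cM) (abs_le.1 hr)
  simpa [h.z1] using this

lemma lip (h : PsiD f f1 f2 c M K) (a b : ℝ) (ha : |a| ≤ M) (hb : |b| ≤ M) :
    |f a - f b| ≤ K * (|b - c| + |a - b|) * |a - b| := by
  have hK := h.K0
  have := (convex_uIcc b a).norm_image_sub_le_of_norm_hasDerivWithin_le (f := f) (f' := f1)
    (C := K * (|b - c| + |a - b|)) (x := b) (y := a) (fun x _ => (h.d1 x).hasDerivWithinAt)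
    (fun x hx => ?_) left_mem_uIcc right_mem_uIcc
  · simpa using this
  · have h1 : |x| ≤ M := by
      have : uIcc b a ⊆ Icc (-M) M := uIcc_subset_Icc (abs_le.1 hb) (abs_le.1 ha)
      exact abs_le.2 (this hx)
    refine (h.b1 x h1).trans ?_
    have h2 : |x - b| ≤ |a - b| := abs_sub_left_of_mem_uIcc hx
    have h3 : |x - c| ≤ |x - b| + |b - c| := abs_sub_le _ _ _
    gcongr
    linarith

lemma b0 (h : PsiD f f1 f2 c M K) (r : ℝ) (hr : |r| ≤ M) : |f r| ≤ K * |r - c| ^ 2 := by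
  have := h.lip r c hr h.cM
  rw [h.z0, sub_zero, sub_self, abs_zero, zero_add] at this
  linarith

end PsiD

lemma abs_pow_deriv2 {q : ℝ} (hq : 2 ≤ q) (r : ℝ) :
    HasDerivAt (fun r : ℝ => |r| ^ (q - 2) * r) ((q - 1) * |r| ^ (q - 2)) r := by
  rcases eq_or_lt_of_le hq with rfl | hq2
  · simp only [sub_self, Real.rpow_zero, one_mul, mul_one]
    exact (hasDerivAt_id' r).congr_deriv (by norm_num)
  by_cases hr : r = 0
  · subst hr
    have h0 : q - 2 ≠ 0 := by linarith
    rw [hasDerivAt_iff_tendsto_slope]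
    simp only [abs_zero, Real.zero_rpow h0, mul_zero]
    have h1 : Tendsto (fun r : ℝ => |r| ^ (q - 2)) (𝓝[≠] 0) (𝓝 0) := by
      have : Continuous (fun r : ℝ => |r| ^ (q - 2)) :=
        continuous_abs.rpow_const (fun x => Or.inr (by linarith))
      have h := this.tendsto 0
      simp only [abs_zero, Real.zero_rpow h0] at h
      exact h.mono_left nhdsWithin_le_nhds
    refine h1.congr' ?_
    filter_upwards [self_mem_nhdsWithin] with x hx
    have : x ≠ 0 := hx
    simp [slope_def_field, this]
  · have h1 := (hasDerivAt_abs hr).rpow_const (p := q - 2) (Or.inl (abs_ne_zero.2 hr))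
    have h2 := h1.mul (hasDerivAt_id r)
    refine h2.congr_deriv ?_
    have h3 : |r| ^ (q - 2) = |r| ^ (q - 2 - 1) * |r| := by
      rw [← Real.rpow_add_one (abs_ne_zero.2 hr)]; congr 1; ring
    have h4 : (SignType.sign r : ℝ) * r = |r| := by
      exact sign_mul_self r
    simp only [id]
    rw [h3]
    linear_combination (q - 2) * |r| ^ (q - 2 - 1) * h4

/-- Bregman function of `|r|^q/q`. -/
def breg (q c r : ℝ) : ℝ := |r| ^ q / q - |c| ^ q / q - |c| ^ (q - 2) * c * (r - c)

lemma breg_psi {q : ℝ} (hq : 2 ≤ q) {c M : ℝ} (hc : |c| ≤ M) (hM : 0 < M) :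
    PsiD (breg q c) (fun r => |r| ^ (q - 2) * r - |c| ^ (q - 2) * c)
      (fun r => (q - 1) * |r| ^ (q - 2)) c M ((q - 1) * M ^ (q - 2)) where
  cM := hc
  K0 := by
    have : 0 < q - 1 := by linarith
    positivity
  d1 r := by
    have h := (((hasDerivAt_abs_rpow r (p := q) (by linarith)).div_const q).sub_const
      (|c| ^ q / q)).sub (((hasDerivAt_id r).sub_const c).const_mul (|c| ^ (q - 2) * c))
    refine h.congr_deriv ?_
    have : q ≠ 0 := by linarith
    field_simp
  d2 r := (abs_pow_deriv2 hq r).sub_const _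
  c2 := continuous_const.mul (continuous_abs.rpow_const (fun x => Or.inr (by linarith)))
  b2 r hr := by
    have : 0 < q - 1 := by linarith
    rw [abs_of_nonneg (by positivity)]
    gcongr
  nn r := by
    have : 0 < q - 1 := by linarith
    positivity
  z0 := by simp [breg]
  z1 := by simp

section
variable {n : ℕ} {s z : ℝ} {u : En n → ℝ} {f f1 f2 : ℝ → ℝ} {c M K : ℝ}

lemma lap_pt (hz : 0 < z) (v : En n) :
    ek1 s z v = -z ^ (1 - 2 * s) * ∑ i, pns n s * z ^ (2 * s) *
      (-2 * aa n s * kk (aa n s + 1) z v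
        + 4 * aa n s * (aa n s + 1) * (v i) ^ 2 * kk (aa n s + 1 + 1) z v) := by
  rw [← Finset.mul_sum]
  have hs : ∑ i, 4 * aa n s * (aa n s + 1) * (v i) ^ 2 * kk (aa n s + 1 + 1) z v
      = 4 * aa n s * (aa n s + 1) * ‖v‖ ^ 2 * kk (aa n s + 1 + 1) z v := by
    rw [EuclideanSpace.real_norm_sq_eq, Finset.mul_sum, Finset.sum_mul]
  have hz1 : z ^ (1 - 2 * s) * z ^ (2 * s) = z := by
    rw [← Real.rpow_add hz]; simp
  rw [Finset.sum_add_distrib, hs]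
  have h1 := kk_succ (aa n s + 1) hz v
  have h2 : ‖v‖ ^ 2 * kk (aa n s + 1 + 1) z v
    = kk (aa n s + 1) z v - z ^ 2 * kk (aa n s + 1 + 1) z v := by rw [← h1]; ring
  rw [mul_assoc (4 * aa n s * (aa n s + 1)), h2]
  simp only [Finset.sum_const, Finset.card_univ, Fintype.card_fin, nsmul_eq_mul]
  unfold ek1
  generalize kk (aa n s + 1) z v = A
  generalize kk (aa n s + 1 + 1) z v = B
  have h4 : (s + 1 : ℝ) = aa n s - n / 2 + 1 := by unfold aa; ring
  rw [h4]
  generalize aa n s = a at *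
  generalize z ^ (1 - 2 * s) = X at *
  generalize z ^ (2 * s) = Y at *
  rw [← hz1]
  ring

lemma int_bdd {k g : En n → ℝ} {C : ℝ} (hk : Integrable k) (hg : Continuous g)
    (hC : ∀ y, |g y| ≤ C) : Integrable (fun y => k y * g y) :=
  hk.mul_bdd (c := C) hg.aestronglyMeasurable (Eventually.of_forall hC)

lemma pk_cont (hz : 0 < z) : Continuous (pk (n := n) s z) :=
  continuous_const.mul (kk_cont _ hz)
lemma ek_cont (hz : 0 < z) : Continuous (ek (n := n) s z) := by
  have := kk_cont (n := n) (aa n s) hz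
  have := kk_cont (n := n) (aa n s + 1) hz
  unfold ek; fun_prop
lemma ek1_cont (hz : 0 < z) : Continuous (ek1 (n := n) s z) := by
  have := kk_cont (n := n) (aa n s + 1 + 1) hz
  have := kk_cont (n := n) (aa n s + 1) hz
  unfold ek1; fun_prop

/-- derivative of the kernel in direction `i`. -/
def dpk (s z : ℝ) (i : Fin n) (v : En n) : ℝ :=
  pns n s * z ^ (2 * s) * (-2 * aa n s * v i * kk (aa n s + 1) z v)
/-- second derivative of the kernel in direction `i`. -/
def ddpk (s z : ℝ) (i : Fin n) (v : En n) : ℝ :=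
  pns n s * z ^ (2 * s) * (-2 * aa n s * kk (aa n s + 1) z v
        + 4 * aa n s * (aa n s + 1) * (v i) ^ 2 * kk (aa n s + 1 + 1) z v)

lemma dpk_cont (hz : 0 < z) (i : Fin n) : Continuous (dpk (n := n) s z i) := by
  have := kk_cont (n := n) (aa n s + 1) hz
  have := coord_cont i
  unfold dpk; fun_prop
lemma ddpk_cont (hz : 0 < z) (i : Fin n) : Continuous (ddpk (n := n) s z i) := by
  have := kk_cont (n := n) (aa n s + 1) hz
  have := kk_cont (n := n) (aa n s + 1 + 1) hz
  have := coord_cont i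
  unfold ddpk; fun_prop

lemma coord_sq_le (i : Fin n) (v : En n) : (v i) ^ 2 ≤ ‖v‖ ^ 2 := by
  rw [EuclideanSpace.real_norm_sq_eq]
  exact Finset.single_le_sum (f := fun i => (v i) ^ 2) (fun j _ => sq_nonneg _) (Finset.mem_univ i)

lemma dpk_int (hs0 : 0 < s) (hz : 0 < z) (i : Fin n) : Integrable (dpk (n := n) s z i) := by
  unfold dpk
  refine Integrable.const_mul ?_ _
  simp_rw [mul_assoc]
  refine Integrable.const_mul (Integrable.const_mul ?_ _) _
  have k1 := kk_cont (n := n) (aa n s + 1) hz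
  have kc := coord_cont i
  refine Integrable.mono' ((kk_integrable (aa_gt n hs0) hz).const_mul (z⁻¹))
    (Continuous.aestronglyMeasurable (by fun_prop)) (Eventually.of_forall fun v => ?_)
  have kp := kk_pos (aa n s + 1) hz v
  rw [Real.norm_eq_abs, abs_mul, abs_of_pos kp, ← kk_succ (aa n s) hz, ← mul_assoc]
  gcongr
  have := coord_sq_le i v
  rw [inv_mul_eq_div, le_div_iff₀ hz]
  rw [← sq_abs] at this
  nlinarith [sq_nonneg (|v i| - z), abs_nonneg (v i)]

lemma ddpk_int (hs0 : 0 < s) (hz : 0 < z) (i : Fin n) : Integrable (ddpk (n := n) s z i) := by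
  unfold ddpk
  refine Integrable.const_mul ?_ _
  refine ((kk1_int hs0 hz).const_mul _).add ?_
  simp_rw [mul_assoc]
  refine Integrable.const_mul (Integrable.const_mul (Integrable.const_mul ?_ _) _) _
  have k1 := kk_cont (n := n) (aa n s + 1 + 1) hz
  have kc := coord_cont i
  refine Integrable.mono' (kk1_int hs0 hz)
    (Continuous.aestronglyMeasurable (by fun_prop)) (Eventually.of_forall fun v => ?_)
  have kp := kk_pos (aa n s + 1 + 1) hz v
  rw [Real.norm_eq_abs, abs_mul, abs_of_pos kp, ← kk_succ (aa n s + 1) hz]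
  gcongr
  have := coord_sq_le i v
  rw [abs_of_nonneg (sq_nonneg _)]
  nlinarith [sq_nonneg z]

lemma pk_line (hz : 0 < z) (x y : En n) (i : Fin n) :
    HasLineDerivAt ℝ (fun y => pk s z (y - x)) (dpk s z i (y - x)) y
      (EuclideanSpace.single i 1) := by
  have h := (kk_line (aa n s) hz (y - x) i).const_mul (pns n s * z ^ (2 * s))
  unfold HasLineDerivAt at *
  refine HasDerivAt.congr_of_eventuallyEq (h.congr_deriv rfl) (Eventually.of_forall fun t => ?_)
  simp only [pk]
  congr 2
  abel

lemma dpk_line (hz : 0 < z) (x y : En n) (i : Fin n) :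
    HasLineDerivAt ℝ (fun y => dpk s z i (y - x)) (ddpk s z i (y - x)) y
      (EuclideanSpace.single i 1) := by
  have h := (((coord_line (y - x) i).const_mul (-2 * aa n s)).mul
    (kk_line (aa n s + 1) hz (y - x) i)).const_mul (pns n s * z ^ (2 * s))
  unfold HasLineDerivAt at *
  refine HasDerivAt.congr_of_eventuallyEq (h.congr_deriv ?_) (Eventually.of_forall fun t => ?_)
  · simp [ddpk]; left; ring
  · simp only [dpk, Pi.mul_apply]
    rw [add_sub_right_comm]

lemma comp_line {g : En n → ℝ} {g' : ℝ} {y e : En n} (hf : ∀ r, HasDerivAt f (f1 r) r)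
    (hg : HasLineDerivAt ℝ g g' y e) : HasLineDerivAt ℝ (fun y => f (g y)) (f1 (g y) * g') y e := by
  unfold HasLineDerivAt at *
  have h := hf (g (y + (0:ℝ) • e))
  have := h.comp (0:ℝ) hg
  refine this.congr_deriv ?_
  simp

/-- the divergence identity -/
lemma divg_zero (hs0 : 0 < s) (h : PsiD f f1 f2 c M K) (hu : IsTest u) (hM : ∀ y, |u y| ≤ M)
    (hz : 0 < z) (x : En n) (i : Fin n) :
    Integrable (fun y => pk s z (y - x) * f2 (cv (pk s z) u y) * (cv (pk s z) (pd i u) y) ^ 2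
        + pk s z (y - x) * f1 (cv (pk s z) u y) * cv (pk s z) (pd i (pd i u)) y
        - f (cv (pk s z) u y) * ddpk s z i (y - x)) ∧
    ∫ y, (pk s z (y - x) * f2 (cv (pk s z) u y) * (cv (pk s z) (pd i u) y) ^ 2
        + pk s z (y - x) * f1 (cv (pk s z) u y) * cv (pk s z) (pd i (pd i u)) y
        - f (cv (pk s z) u y) * ddpk s z i (y - x)) = 0 := by
  have hK := h.K0
  obtain ⟨M1, hM10, hM1⟩ := (hu.pd i).bdd
  obtain ⟨M2, hM20, hM2⟩ := ((hu.pd i).pd i).bdd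
  have cU : Continuous (cv (pk s z) u) := cv_cont (pk_int hs0 hz) hu.1.continuous hM
  have cU1 : Continuous (cv (pk s z) (pd i u)) :=
    cv_cont (pk_int hs0 hz) (hu.pd i).1.continuous hM1
  have cU2 : Continuous (cv (pk s z) (pd i (pd i u))) :=
    cv_cont (pk_int hs0 hz) ((hu.pd i).pd i).1.continuous hM2
  have bU := U_bound (u := u) hs0 hz hM
  have bU1 := U_bound hs0 hz hM1
  have bU2 := U_bound hs0 hz hM2
  have hM0 : 0 ≤ M := (abs_nonneg _).trans (hM x)
  have hrc : ∀ y, |cv (pk s z) u y - c| ≤ 2 * M := fun y => by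
    have := abs_sub (cv (pk s z) u y) c
    linarith [bU y, h.cM]
  have ip : Integrable (fun y => pk s z (y - x)) := (pk_int hs0 hz).comp_sub_right x
  have idp : Integrable (fun y => dpk s z i (y - x)) := (dpk_int hs0 hz i).comp_sub_right x
  have iddp : Integrable (fun y => ddpk s z i (y - x)) := (ddpk_int hs0 hz i).comp_sub_right x
  have cf := h.c0
  have cf1 := h.c1
  have cf2 := h.c2
  have bf : ∀ y, |f (cv (pk s z) u y)| ≤ K * (2 * M) ^ 2 := fun y => by
    refine (h.b0 _ (bU y)).trans ?_
    have := hrc y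
    gcongr
  have bf1 : ∀ y, |f1 (cv (pk s z) u y)| ≤ K * (2 * M) := fun y => by
    refine (h.b1 _ (bU y)).trans ?_
    have := hrc y
    gcongr
  have i1 := int_bdd (g := fun y => f2 (cv (pk s z) u y) * (cv (pk s z) (pd i u) y) ^ 2)
    (C := K * M1 ^ 2) ip (by fun_prop) (fun y => by
      have := h.b2 _ (bU y)
      have := bU1 y
      rw [abs_mul, abs_pow]; gcongr)
  have i2 := int_bdd (g := fun y => f1 (cv (pk s z) u y) * cv (pk s z) (pd i (pd i u)) y)
    (C := K * (2 * M) * M2) ip (by fun_prop) (fun y => by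
      have := bf1 y
      have := bU2 y
      rw [abs_mul]; gcongr)
  have i3 := int_bdd iddp (g := fun y => f (cv (pk s z) u y)) (by fun_prop) bf
  have j1 := int_bdd (g := fun y => f1 (cv (pk s z) u y) * cv (pk s z) (pd i u) y)
    (C := K * (2 * M) * M1) ip (by fun_prop) (fun y => by
      have := bf1 y
      have := bU1 y
      rw [abs_mul]; gcongr)
  have j2 := int_bdd idp (g := fun y => f (cv (pk s z) u y)) (by fun_prop) bf
  have I : Integrable (fun y => pk s z (y - x) * f2 (cv (pk s z) u y) * (cv (pk s z) (pd i u) y) ^ 2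
        + pk s z (y - x) * f1 (cv (pk s z) u y) * cv (pk s z) (pd i (pd i u)) y
        - f (cv (pk s z) u y) * ddpk s z i (y - x)) := by
    refine ((i1.add i2).sub i3).congr (Eventually.of_forall fun y => ?_)
    simp only [Pi.add_apply, Pi.sub_apply]; ring
  refine ⟨I, ?_⟩
  refine ibp_zero (f := fun y => pk s z (y - x) * (f1 (cv (pk s z) u y) * cv (pk s z) (pd i u) y)
    - dpk s z i (y - x) * f (cv (pk s z) u y)) (EuclideanSpace.single i 1) I (j1.sub j2) ?_
  intro y
  have l1 := pk_line (s := s) hz x y i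
  have l2 := dpk_line (s := s) hz x y i
  have l3 := U_line hs0 hu hz y i
  have l4 := U_line hs0 (hu.pd i) hz y i
  have h1 := (l1.mul ((comp_line h.d2 l3).mul l4)).sub (l2.mul (comp_line h.d1 l3))
  refine HasDerivAt.congr_deriv h1 ?_
  simp
  ring
end

section
variable {n : ℕ} {s z : ℝ} {u : En n → ℝ} {f f1 f2 : ℝ → ℝ} {c M K : ℝ}

/-- integrand of the boundary term -/
def Fb (f f1 : ℝ → ℝ) (s : ℝ) (u : En n → ℝ) (x : En n) (z : ℝ) (y : En n) : ℝ :=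
  pk s z (x - y) * (f1 (cv (pk s z) u y) * cv (ek s z) u y)
    - ek s z (x - y) * f (cv (pk s z) u y)

/-- its `z` derivative -/
def Fb' (f f1 f2 : ℝ → ℝ) (s : ℝ) (u : En n → ℝ) (x : En n) (z : ℝ) (y : En n) : ℝ :=
  pk s z (x - y) * (f2 (cv (pk s z) u y) * (z ^ (2 * s - 1) * (cv (ek s z) u y) ^ 2))
    + pk s z (x - y) * (f1 (cv (pk s z) u y) * cv (ek1 s z) u y)
    - ek1 s z (x - y) * f (cv (pk s z) u y)

/-- the energy integrand -/
def Gd (f2 : ℝ → ℝ) (s : ℝ) (u : En n → ℝ) (x : En n) (z : ℝ) (y : En n) : ℝ :=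
  pk s z (x - y) * (f2 (cv (pk s z) u y) *
    (∑ i, (cv (pk s z) (pd i u) y) ^ 2 + (z ^ (2 * s - 1) * cv (ek s z) u y) ^ 2))

/-- basic bounds collected -/
lemma bd_all (hs0 : 0 < s) (h : PsiD f f1 f2 c M K) (hM : ∀ y, |u y| ≤ M)
    (hz : 0 < z) (y : En n) : |cv (pk s z) u y| ≤ M ∧ |f (cv (pk s z) u y)| ≤ K * (2 * M) ^ 2 ∧
      |f1 (cv (pk s z) u y)| ≤ K * (2 * M) ∧ |f2 (cv (pk s z) u y)| ≤ K := by
  have hK := h.K0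
  have bU := U_bound (u := u) hs0 hz hM y
  have hM0 : 0 ≤ M := (abs_nonneg _).trans (hM y)
  have hrc : |cv (pk s z) u y - c| ≤ 2 * M := by
    have := abs_sub (cv (pk s z) u y) c
    linarith [h.cM]
  refine ⟨bU, ?_, ?_, h.b2 _ bU⟩
  · refine (h.b0 _ bU).trans ?_
    gcongr
  · refine (h.b1 _ bU).trans ?_
    gcongr

lemma cU (hs0 : 0 < s) (hu : IsTest u) (hz : 0 < z) : Continuous (cv (pk s z) u) := by
  obtain ⟨M, _, hM⟩ := hu.bdd
  exact cv_cont (pk_int hs0 hz) hu.1.continuous hM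
lemma cZ (hs0 : 0 < s) (hu : IsTest u) (hz : 0 < z) : Continuous (cv (ek s z) u) := by
  obtain ⟨M, _, hM⟩ := hu.bdd
  exact cv_cont (ek_int hs0 hz) hu.1.continuous hM
lemma cW (hs0 : 0 < s) (hu : IsTest u) (hz : 0 < z) : Continuous (cv (ek1 s z) u) := by
  obtain ⟨M, _, hM⟩ := hu.bdd
  exact cv_cont (ek1_int hs0 hz) hu.1.continuous hM

lemma Fb_int1 (hs0 : 0 < s) (h : PsiD f f1 f2 c M K) (hu : IsTest u)
    (hM : ∀ y, |u y| ≤ M) (hz : 0 < z) (x : En n) :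
    Integrable (fun y => pk s z (x - y) * (f1 (cv (pk s z) u y) * cv (ek s z) u y)) := by
  have hM0 : 0 ≤ M := (abs_nonneg _).trans (hM x)
  have hK := h.K0
  have c1 := cU hs0 hu hz
  have c2 := cZ hs0 hu hz
  have c3 := h.c1
  refine int_bdd (C := (K * (2 * M)) * (M * ∫ v : En n, |ek s z v|)) (pk_shift_int hs0 hz x)
    (by fun_prop) fun y => ?_
  rw [abs_mul]
  have h1 := (bd_all hs0 h hM hz y).2.2.1
  have h2 := cv_bound (ek_int hs0 hz) hM y
  gcongr

lemma Fb_int2 (hs0 : 0 < s) (h : PsiD f f1 f2 c M K) (hu : IsTest u)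
    (hM : ∀ y, |u y| ≤ M) (hz : 0 < z) (x : En n) :
    Integrable (fun y => ek s z (x - y) * f (cv (pk s z) u y)) := by
  have c1 := cU hs0 hu hz
  have c3 := h.c0
  exact int_bdd (ek_shift_int hs0 hz x) (by fun_prop) fun y => (bd_all hs0 h hM hz y).2.1

lemma Fb_int (hs0 : 0 < s) (h : PsiD f f1 f2 c M K) (hu : IsTest u)
    (hM : ∀ y, |u y| ≤ M) (hz : 0 < z) (x : En n) : Integrable (Fb f f1 s u x z) :=
  (Fb_int1 hs0 h hu hM hz x).sub (Fb_int2 hs0 h hu hM hz x)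

lemma Fb_cont (hs0 : 0 < s) (h : PsiD f f1 f2 c M K) (hu : IsTest u) (hz : 0 < z) (x : En n) :
    Continuous (Fb f f1 s u x z) := by
  have c1 := cU hs0 hu hz
  have c2 := cZ hs0 hu hz
  have c3 := h.c1
  have c4 := h.c0
  have c5 := pk_cont (n := n) (s := s) hz
  have c6 := ek_cont (n := n) (s := s) hz
  unfold Fb; fun_prop

lemma Fb'_cont (hs0 : 0 < s) (h : PsiD f f1 f2 c M K) (hu : IsTest u) (hz : 0 < z) (x : En n) :
    Continuous (Fb' f f1 f2 s u x z) := by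
  have c1 := cU hs0 hu hz
  have c2 := cZ hs0 hu hz
  have c2' := cW hs0 hu hz
  have c3 := h.c1
  have c4 := h.c0
  have c4' := h.c2
  have c5 := pk_cont (n := n) (s := s) hz
  have c6 := ek_cont (n := n) (s := s) hz
  have c7 := ek1_cont (n := n) (s := s) hz
  unfold Fb'; fun_prop

lemma Fb_deriv_pt (hs0 : 0 < s) (h : PsiD f f1 f2 c M K) (hu : IsTest u) (hz : 0 < z)
    (x y : En n) : HasDerivAt (fun z => Fb f f1 s u x z y) (Fb' f f1 f2 s u x z y) z := by
  have e1 := pk_deriv (s := s) hz (x - y)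
  have e2 := ek_deriv (s := s) hz (x - y)
  have e3 := cv_pk_deriv hs0 hu hz y
  have e4 := cv_ek_deriv hs0 hu hz y
  have e5 := (h.d1 (cv (pk s z) u y)).comp z e3
  have e6 := (h.d2 (cv (pk s z) u y)).comp z e3
  have := (e1.mul (e6.mul e4)).sub (e2.mul e5)
  refine this.congr_deriv ?_
  simp only [Fb', Function.comp, Pi.mul_apply]
  ring

lemma Fb_deriv (hn : 1 ≤ n) (hs0 : 0 < s) (hs1 : s < 1) (h : PsiD f f1 f2 c M K) (hu : IsTest u)
    (hM : ∀ y, |u y| ≤ M) {z₀ : ℝ} (hz : 0 < z₀) (x : En n) :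
    HasDerivAt (fun z => ∫ y, Fb f f1 s u x z y) (∫ y, Fb' f f1 f2 s u x z₀ y) z₀ := by
  obtain ⟨C, hC0, hC⟩ := U_close hn hs0 hs1 hu
  have hM0 : 0 ≤ M := (abs_nonneg _).trans (hM x)
  have hK := h.K0
  have hp := pns_pos n hs0
  have hc1 := ce1_pos (n := n) hs0
  have ha := aa_pos n hs0
  obtain ⟨a, rfl⟩ : ∃ a, z₀ = 2 * a := ⟨z₀ / 2, by ring⟩
  have ha0 : 0 < a := by linarith
  set J := ∫ v : En n, kk (aa n s + 1) a v with hJ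
  have hJ0 : 0 ≤ J := integral_nonneg fun v => (kk_pos _ ha0 v).le
  have key := hasDerivAt_integral_of_dominated_loc_of_deriv_le (μ := (volume : Measure (En n)))
    (F := Fb f f1 s u x) (F' := Fb' f f1 f2 s u x) (x₀ := 2 * a) (s := Metric.ball (2 * a) a)
    (bound := fun y =>
      (pns n s * (3 * a) ^ (2 * s) * (K * (((3 * a) ^ (2 * s) * a⁻¹) * C ^ 2))
        + pns n s * (3 * a) ^ (2 * s) * ((K * (2 * M)) * (M * (ce1 n s * (3 * a) * J))))
          * kk (aa n s) a (x - y)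
        + ce1 n s * (3 * a) * (K * (2 * M) ^ 2) * kk (aa n s + 1) a (x - y))
    (Metric.ball_mem_nhds _ ha0) ?_ (Fb_int hs0 h hu hM hz x)
    (Fb'_cont hs0 h hu hz x).aestronglyMeasurable ?_ ?_ ?_
  · exact key.2
  · filter_upwards [lt_mem_nhds hz] with z hz'
    exact (Fb_cont hs0 h hu hz' x).aestronglyMeasurable
  · refine Eventually.of_forall fun y z hzb => ?_
    rw [Metric.mem_ball, Real.dist_eq, abs_lt] at hzb
    have hza : a ≤ z := by linarith [hzb.1]
    have hz3 : z ≤ 3 * a := by linarith [hzb.2]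
    have hz0 : 0 < z := by linarith
    obtain ⟨bU, bf, bf1, bf2⟩ := bd_all hs0 h hM hz0 y
    have hk0 := kk_mono ha.le ha0 hza (x - y)
    have hk1 := kk_mono (b := aa n s + 1) (by linarith) ha0 hza (x - y)
    have kp0 := kk_pos (aa n s) hz0 (x - y)
    have kp1 := kk_pos (aa n s + 1) hz0 (x - y)
    have kp0' := kk_pos (aa n s) ha0 (x - y)
    have kp1' := kk_pos (aa n s + 1) ha0 (x - y)
    have p1 : |pk s z (x - y)| ≤ pns n s * (3 * a) ^ (2 * s) * kk (aa n s) a (x - y) := by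
      rw [abs_of_pos (pk_pos hs0 hz0 _)]
      unfold pk
      gcongr
    have p2 : z ^ (2 * s - 1) ≤ (3 * a) ^ (2 * s) * a⁻¹ := by
      rw [Real.rpow_sub_one hz0.ne', div_eq_mul_inv]
      gcongr
    have p3 := (hC z hz0 y).2
    have p4 : |ek1 s z (x - y)| ≤ ce1 n s * (3 * a) * kk (aa n s + 1) a (x - y) :=
      (ek1_le hs0 hz0 _).trans (by gcongr)
    have p5 : |cv (ek1 s z) u y| ≤ M * (ce1 n s * (3 * a) * J) := by
      refine (cv_bound (ek1_int hs0 hz0) hM y).trans ?_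
      gcongr
      rw [hJ, ← integral_const_mul]
      refine integral_mono (ek1_int hs0 hz0).abs ((kk1_int hs0 ha0).const_mul _) fun v => ?_
      have hk1 := kk_mono (b := aa n s + 1) (by linarith) ha0 hza v
      have kp1 := kk_pos (aa n s + 1) hz0 v
      exact (ek1_le hs0 hz0 _).trans (by gcongr)
    have p2' : |z ^ (2 * s - 1)| ≤ (3 * a) ^ (2 * s) * a⁻¹ := by
      rwa [abs_of_pos (by positivity)]
    rw [Real.norm_eq_abs, Fb']
    refine (abs_sub _ _).trans ((add_le_add (abs_add_le _ _) le_rfl).trans ?_)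
    rw [add_mul]
    refine add_le_add (add_le_add ?_ ?_) ?_
    · rw [abs_mul, abs_mul, abs_mul, abs_pow]
      calc _ ≤ (pns n s * (3 * a) ^ (2 * s) * kk (aa n s) a (x - y)) *
            (K * (((3 * a) ^ (2 * s) * a⁻¹) * C ^ 2)) := by gcongr
        _ = _ := by ring
    · rw [abs_mul, abs_mul]
      calc _ ≤ (pns n s * (3 * a) ^ (2 * s) * kk (aa n s) a (x - y)) *
            ((K * (2 * M)) * (M * (ce1 n s * (3 * a) * J))) := by gcongr
        _ = _ := by ring
    · rw [abs_mul]
      calc _ ≤ (ce1 n s * (3 * a) * kk (aa n s + 1) a (x - y)) * (K * (2 * M) ^ 2) := by gcongr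
        _ = _ := by ring
  · exact (((kk_integrable (aa_gt n hs0) ha0).comp_sub_left x).const_mul _).add
      (((kk1_int hs0 ha0).comp_sub_left x).const_mul _)
  · refine Eventually.of_forall fun y z hzb => ?_
    rw [Metric.mem_ball, Real.dist_eq, abs_lt] at hzb
    exact Fb_deriv_pt hs0 h hu (by linarith [hzb.1]) x y

lemma Gd_int (hs0 : 0 < s) (h : PsiD f f1 f2 c M K) (hu : IsTest u)
    (hM : ∀ y, |u y| ≤ M) (hz : 0 < z) (x : En n) : Integrable (Gd f2 s u x z) := by
  have hM0 : 0 ≤ M := (abs_nonneg _).trans (hM x)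
  have hK := h.K0
  have c1 := cU hs0 hu hz
  have c2 := cZ hs0 hu hz
  have c3 := h.c2
  choose B hB0 hB using fun i => (hu.pd i).bdd
  have c4 : ∀ i, Continuous (cv (pk s z) (pd i u)) := fun i => cU hs0 (hu.pd i) hz
  refine int_bdd (C := K * (∑ i, (B i) ^ 2 + (z ^ (2 * s - 1) * (M * ∫ v : En n, |ek s z v|)) ^ 2))
    (pk_shift_int hs0 hz x) (by fun_prop) fun y => ?_
  rw [abs_mul]
  have h1 := (bd_all hs0 h hM hz y).2.2.2
  have h2 := cv_bound (ek_int hs0 hz) hM y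
  have h3 : ∀ i, |cv (pk s z) (pd i u) y| ≤ B i := fun i => U_bound hs0 hz (hB i) y
  gcongr
  rw [abs_of_nonneg (by positivity)]
  refine add_le_add (Finset.sum_le_sum fun i _ => ?_) ?_
  · rw [← sq_abs]; have := h3 i; gcongr
  · rw [← sq_abs, abs_mul, abs_of_pos (show 0 < z ^ (2 * s - 1) by positivity)]; gcongr

lemma Fb'_eq (hs0 : 0 < s) (h : PsiD f f1 f2 c M K) (hu : IsTest u)
    (hM : ∀ y, |u y| ≤ M) (hz : 0 < z) (x : En n) :
    ∫ y, Fb' f f1 f2 s u x z y = z ^ (1 - 2 * s) * ∫ y, Gd f2 s u x z y := by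
  have hd := fun i => divg_zero hs0 h hu hM hz x i
  have e : ∀ y, Fb' f f1 f2 s u x z y = z ^ (1 - 2 * s) * Gd f2 s u x z y - z ^ (1 - 2 * s) *
      ∑ i, (pk s z (y - x) * f2 (cv (pk s z) u y) * (cv (pk s z) (pd i u) y) ^ 2
        + pk s z (y - x) * f1 (cv (pk s z) u y) * cv (pk s z) (pd i (pd i u)) y
        - f (cv (pk s z) u y) * ddpk s z i (y - x)) := by
    intro y
    have hpk : pk s z (y - x) = pk s z (x - y) := by rw [← pk_neg, neg_sub]
    have hek : ek1 s z (x - y) = - z ^ (1 - 2 * s) * ∑ i, ddpk s z i (y - x) := by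
      rw [← ek1_neg, neg_sub, lap_pt hz]; rfl
    rw [Finset.sum_sub_distrib, Finset.sum_add_distrib, ← Finset.mul_sum, ← Finset.mul_sum,
      ← Finset.mul_sum, hpk, Fb', Gd, hek, lap_rel hs0 hu hz]
    have hz1 : z ^ (2 * s - 1) = z ^ (1 - 2 * s) * (z ^ (2 * s - 1) * z ^ (2 * s - 1)) := by
      rw [← Real.rpow_add hz, ← Real.rpow_add hz]; congr 1; ring
    generalize z ^ (1 - 2 * s) = X at *
    generalize z ^ (2 * s - 1) = Y at *
    generalize cv (ek s z) u y = Z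
    linear_combination pk s z (x - y) * f2 (cv (pk s z) u y) * Z ^ 2 * hz1
  simp_rw [e]
  have i1 : Integrable (fun y => ∑ i, (pk s z (y - x) * f2 (cv (pk s z) u y) * (cv (pk s z) (pd i u) y) ^ 2
        + pk s z (y - x) * f1 (cv (pk s z) u y) * cv (pk s z) (pd i (pd i u)) y
        - f (cv (pk s z) u y) * ddpk s z i (y - x))) := integrable_finsetSum _ fun i _ => (hd i).1
  rw [integral_sub ((Gd_int hs0 h hu hM hz x).const_mul _) (i1.const_mul _), integral_const_mul,
    integral_const_mul, integral_finsetSum _ fun i _ => (hd i).1]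
  simp [fun i => (hd i).2]
end

section
variable {n : ℕ} {s z : ℝ} {u : En n → ℝ} {f f1 f2 : ℝ → ℝ} {c M K : ℝ}

lemma Fb_inf (hs0 : 0 < s) (h : PsiD f f1 f2 c M K) (hu : IsTest u)
    (hM : ∀ y, |u y| ≤ M) (x : En n) :
    Tendsto (fun z => ∫ y, Fb f f1 s u x z y) atTop (𝓝 0) := by
  have hM0 : 0 ≤ M := (abs_nonneg _).trans (hM x)
  have hK := h.K0
  have ha := aa_pos n hs0
  set A := 2 * s + 2 * aa n s with hA
  have hA0 : 0 < A := by positivity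
  have hlim : Tendsto (fun z : ℝ => ((K * (2 * M)) * (M * A) + A * (K * (2 * M) ^ 2)) * z ^ (-(2 * s)))
      atTop (𝓝 0) := by
    have := (tendsto_rpow_neg_atTop (y := 2 * s) (by positivity)).const_mul
      ((K * (2 * M)) * (M * A) + A * (K * (2 * M) ^ 2))
    simpa using this
  refine squeeze_zero_norm' ?_ hlim
  filter_upwards [eventually_gt_atTop 0] with z hz
  rw [Real.norm_eq_abs]
  have hi : Integrable (fun y => (((K * (2 * M)) * (M * A) + A * (K * (2 * M) ^ 2)) * z ^ (-(2 * s)))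
    * pk s z (x - y)) := (pk_shift_int hs0 hz x).const_mul _
  refine (abs_int_le hi fun y => ?_).trans (le_of_eq ?_)
  · obtain ⟨bU, bf, bf1, bf2⟩ := bd_all hs0 h hM hz y
    have h1 := ek_le_pk hs0 hz (x - y)
    have h2 : |cv (ek s z) u y| ≤ M * (A * z ^ (-(2 * s))) :=
      (cv_bound (ek_int hs0 hz) hM y).trans (by
        have := ek_abs_integral (n := n) hs0 hz
        gcongr)
    have hp := pk_pos hs0 hz (x - y)
    rw [Fb]
    refine (abs_sub _ _).trans ?_
    rw [abs_mul, abs_mul, abs_mul, abs_of_pos hp]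
    calc _ ≤ pk s z (x - y) * ((K * (2 * M)) * (M * (A * z ^ (-(2 * s))))) +
          (A * z ^ (-(2 * s)) * pk s z (x - y)) * (K * (2 * M) ^ 2) := by gcongr
      _ = _ := by ring
  · rw [integral_const_mul, pk_shift_integral hs0 hz, mul_one]

lemma ek_lim (hs0 : 0 < s) (v : En n) (hv : v ≠ 0) :
    Tendsto (fun z => ek s z v) (𝓝[>] 0) (𝓝 (2 * s * pns n s * ‖v‖ ^ (-((n : ℝ) + 2 * s)))) := by
  have hv0 : 0 < ‖v‖ := norm_pos_iff.2 hv
  have hk : ∀ b, ContinuousAt (fun z => kk b z v) 0 := fun b => by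
    unfold kk
    refine ContinuousAt.rpow_const (by fun_prop) (Or.inl (by positivity))
  have h1 := hk (aa n s)
  have h2 := hk (aa n s + 1)
  have : ContinuousAt (fun z => ek s z v) 0 := by
    unfold ek
    fun_prop
  have h3 := this.tendsto.mono_left (nhdsWithin_le_nhds (s := Ioi 0))
  convert h3 using 2
  have : kk (aa n s) 0 v = ‖v‖ ^ (-((n : ℝ) + 2 * s)) := by
    unfold kk
    rw [show ‖v‖ ^ 2 + (0:ℝ) ^ 2 = ‖v‖ ^ (2:ℝ) by norm_num, ← Real.rpow_mul hv0.le]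
    congr 1
    unfold aa; ring
  rw [ek, this]; ring

lemma sing_lim (hn : 1 ≤ n) (hs0 : 0 < s) (hs1 : s < 1) (hu : IsTest u) (hM : ∀ y, |u y| ≤ M)
    (x : En n) (h : PsiD f f1 f2 (u x) M K) :
    Tendsto (fun z => ∫ y, ek s z (x - y) * f (u y)) (𝓝[>] 0)
      (𝓝 (∫ y, 2 * s * pns n s * ‖x - y‖ ^ (-((n : ℝ) + 2 * s)) * f (u y))) := by
  obtain ⟨M1, hM10, hM1⟩ := hu.first
  have hK := h.K0
  have hce := ce_pos (n := n) hs0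
  refine tendsto_integral_filter_of_dominated_convergence
    (fun y => ce n s * (K * M1) * Kd s (x - y)) ?_ ?_
    (((Kd_int hn hs0 hs1).comp_sub_left x).const_mul _) ?_
  · filter_upwards [self_mem_nhdsWithin] with z hz
    have c1 := ek_cont (n := n) (s := s) hz
    have c2 := h.c0
    have c3 := hu.1.continuous
    exact Continuous.aestronglyMeasurable (by fun_prop)
  · filter_upwards [self_mem_nhdsWithin] with z hz
    have hz : 0 < z := hz
    refine Eventually.of_forall fun y => ?_
    by_cases hxy : x - y = 0
    · have : x = y := sub_eq_zero.1 hxy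
      subst this
      have := Kd_nonneg s (x - x)
      rw [h.z0, mul_zero, norm_zero]
      positivity
    · rw [Real.norm_eq_abs, abs_mul]
      have h1 := ek_le hs0 hz (x - y)
      have h2 := kk_le_norm hs0 z (x - y) hxy
      have h3 := h.b0 (u y) (hM y)
      have h4 := hM1 x y
      calc _ ≤ (ce n s * ‖x - y‖ ^ (-((n : ℝ) + 2 * s))) * (K * (M1 * min (‖x - y‖ ^ 2) 1)) := by
            refine mul_le_mul (h1.trans (by gcongr)) (h3.trans (by gcongr)) (abs_nonneg _)
              (by positivity)
        _ = _ := by unfold Kd; ring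
  · refine Eventually.of_forall fun y => ?_
    by_cases hxy : x - y = 0
    · have : x = y := sub_eq_zero.1 hxy
      subst this
      simp [h.z0]
    · exact (ek_lim hs0 _ hxy).mul_const _

lemma Fb_zero (hn : 1 ≤ n) (hs0 : 0 < s) (hs1 : s < 1) (hu : IsTest u) (hM : ∀ y, |u y| ≤ M)
    (x : En n) (h : PsiD f f1 f2 (u x) M K) :
    Tendsto (fun z => ∫ y, Fb f f1 s u x z y) (𝓝[>] 0)
      (𝓝 (- ∫ y, 2 * s * pns n s * ‖x - y‖ ^ (-((n : ℝ) + 2 * s)) * f (u y))) := by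
  obtain ⟨C, hC0, hC⟩ := U_close hn hs0 hs1 hu
  obtain ⟨C', hC0', hC'⟩ := pk_diff hn hs0 hs1 hu
  have hM0 : 0 ≤ M := (abs_nonneg _).trans (hM x)
  have hK := h.K0
  have ha := aa_pos n hs0
  set A := 2 * s + 2 * aa n s with hA
  have hA0 : 0 < A := by positivity
  have S := (sing_lim hn hs0 hs1 hu hM x h).neg
  rw [← zero_add (- ∫ y, 2 * s * pns n s * ‖x - y‖ ^ (-((n : ℝ) + 2 * s)) * f (u y))]
  have hdiff : Tendsto (fun z => (∫ y, Fb f f1 s u x z y) - (- ∫ y, ek s z (x - y) * f (u y)))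
      (𝓝[>] 0) (𝓝 0) := by
    have hlim : Tendsto (fun z : ℝ => (K * C + A * K * C) * (C' * z ^ s + C * z ^ (2 * s)))
        (𝓝[>] 0) (𝓝 0) := by
      have hc : ContinuousAt (fun z : ℝ => (K * C + A * K * C) * (C' * z ^ s + C * z ^ (2 * s))) 0 := by
        have h1 := Real.continuousAt_rpow_const 0 s (Or.inr hs0.le)
        have h2 := Real.continuousAt_rpow_const 0 (2 * s) (Or.inr (by positivity))
        fun_prop
      have := hc.tendsto.mono_left (nhdsWithin_le_nhds (s := Ioi 0))
      simpa [Real.zero_rpow hs0.ne', Real.zero_rpow (show 2 * s ≠ 0 by positivity)] using this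
    refine squeeze_zero_norm' ?_ hlim
    filter_upwards [self_mem_nhdsWithin] with z hz
    have hz : 0 < z := hz
    have i0 := Fb_int hs0 h hu hM hz x
    have i1 : Integrable (fun y => ek s z (x - y) * f (u y)) := by
      have c1 := h.c0
      have c2 := hu.1.continuous
      refine int_bdd (C := K * (2 * M) ^ 2) (ek_shift_int hs0 hz x) (by fun_prop) fun y => ?_
      refine (h.b0 _ (hM y)).trans ?_
      have : |u y - u x| ≤ 2 * M := by
        have := abs_sub (u y) (u x)
        linarith [hM y, hM x]
      gcongr
    obtain ⟨j0, j1⟩ := hC' z hz x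
    have j2 : Integrable (fun y => (K * C + A * K * C) * (pk s z (x - y) * |u y - u x|) +
      (K * C + A * K * C) * (C * z ^ (2 * s)) * pk s z (x - y)) :=
      (j0.const_mul _).add ((pk_shift_int hs0 hz x).const_mul _)
    rw [Real.norm_eq_abs, sub_neg_eq_add, ← integral_add i0 i1]
    refine (abs_int_le j2 fun y => ?_).trans ?_
    · have hp := pk_pos hs0 hz (x - y)
      obtain ⟨u1, u2⟩ := hC z hz y
      have bU := (bd_all hs0 h hM hz y).1
      have h1 := ek_le_pk hs0 hz (x - y)
      have h2 := h.b1 _ bU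
      have h3 := h.lip _ _ bU (hM y)
      have h4 : |cv (pk s z) u y - u x| ≤ |u y - u x| + C * z ^ (2 * s) := by
        have := abs_sub_le (cv (pk s z) u y) (u y) (u x)
        linarith
      have hzz : z ^ (-(2 * s)) * z ^ (2 * s) = 1 := by
        rw [← Real.rpow_add hz]; simp
      rw [show Fb f f1 s u x z y + ek s z (x - y) * f (u y) =
        pk s z (x - y) * (f1 (cv (pk s z) u y) * cv (ek s z) u y)
          - ek s z (x - y) * (f (cv (pk s z) u y) - f (u y)) by unfold Fb; ring]
      refine (abs_sub _ _).trans ?_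
      rw [abs_mul, abs_mul, abs_mul, abs_of_pos hp]
      calc _ ≤ pk s z (x - y) * ((K * (|u y - u x| + C * z ^ (2 * s))) * C) +
            (A * z ^ (-(2 * s)) * pk s z (x - y)) *
              (K * (|u y - u x| + C * z ^ (2 * s)) * (C * z ^ (2 * s))) := by
              have h5 : |f1 (cv (pk s z) u y)| ≤ K * (|u y - u x| + C * z ^ (2 * s)) :=
                h2.trans (by gcongr)
              have h6 : |f (cv (pk s z) u y) - f (u y)| ≤
                K * (|u y - u x| + C * z ^ (2 * s)) * (C * z ^ (2 * s)) := h3.trans (by gcongr)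
              gcongr
        _ = pk s z (x - y) * ((K * (|u y - u x| + C * z ^ (2 * s))) * C) +
            A * pk s z (x - y) * (K * (|u y - u x| + C * z ^ (2 * s)) * C) *
              (z ^ (-(2 * s)) * z ^ (2 * s)) := by ring
        _ = _ := by rw [hzz]; ring
    · rw [integral_add (j0.const_mul _) ((pk_shift_int hs0 hz x).const_mul _), integral_const_mul,
        integral_const_mul, pk_shift_integral hs0 hz, mul_one, ← mul_add]
      gcongr
  refine (hdiff.add S).congr fun z => ?_
  ring

lemma energy (hn : 1 ≤ n) (hs0 : 0 < s) (hs1 : s < 1) (hu : IsTest u) (hM : ∀ y, |u y| ≤ M)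
    (x : En n) (h : PsiD f f1 f2 (u x) M K) :
    ∫ z in Ioi (0:ℝ), z ^ (1 - 2 * s) * ∫ y, Gd f2 s u x z y =
      2 * s * pns n s * ∫ y, ‖x - y‖ ^ (-((n : ℝ) + 2 * s)) * f (u y) := by
  have L0 := Fb_zero hn hs0 hs1 hu hM x h
  set L := - ∫ y, 2 * s * pns n s * ‖x - y‖ ^ (-((n : ℝ) + 2 * s)) * f (u y) with hL
  have key := integral_Ioi_of_hasDerivAt_of_nonneg (a := (0:ℝ))
    (g := fun z => if z ≤ 0 then L else ∫ y, Fb f f1 s u x z y)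
    (g' := fun z => z ^ (1 - 2 * s) * ∫ y, Gd f2 s u x z y) (l := 0) ?_ ?_ ?_ ?_
  · rw [key]
    simp only [le_refl, if_true, zero_sub, hL, neg_neg]
    simp_rw [mul_assoc]
    rw [integral_const_mul, integral_const_mul, integral_const_mul]
  · rw [← continuousWithinAt_Ioi_iff_Ici]
    unfold ContinuousWithinAt
    simp only [le_refl, if_true]
    refine L0.congr' ?_
    filter_upwards [self_mem_nhdsWithin] with z hz
    have hz : 0 < z := hz
    simp [not_le.2 hz]
  · intro z hz
    have hz : 0 < z := hz
    rw [← Fb'_eq hs0 h hu hM hz x]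
    refine (Fb_deriv hn hs0 hs1 h hu hM hz x).congr_of_eventuallyEq ?_
    filter_upwards [lt_mem_nhds hz] with t ht
    simp [not_le.2 ht]
  · intro z hz
    have hz : 0 < z := hz
    refine mul_nonneg (by positivity) (integral_nonneg fun y => ?_)
    have h1 := pk_pos hs0 hz (x - y)
    have h2 := h.nn (cv (pk s z) u y)
    simp only [Pi.zero_apply, Gd]
    have : 0 ≤ ∑ i, (cv (pk s z) (pd i u) y) ^ 2 := Finset.sum_nonneg fun i _ => sq_nonneg _
    positivity
  · refine (Fb_inf hs0 h hu hM x).congr' ?_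
    filter_upwards [eventually_gt_atTop 0] with z hz
    simp [not_le.2 hz]
end

section
variable {n : ℕ} {s z : ℝ} {u : En n → ℝ}

lemma trunc_meas (x : En n) (ε : ℝ) : MeasurableSet {y : En n | ε < ‖x - y‖} :=
  (isOpen_lt continuous_const (by fun_prop)).measurableSet

lemma trunc_lim {g : En n → ℝ} (x : En n) (hg : Integrable g) (hx : g x = 0) :
    Tendsto (fun ε : ℝ => ∫ y in {y : En n | ε < ‖x - y‖}, g y) (𝓝[>] 0) (𝓝 (∫ y, g y)) := by
  simp_rw [← integral_indicator (trunc_meas x _)]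
  refine tendsto_integral_filter_of_dominated_convergence (fun y => |g y|) ?_ ?_ hg.abs ?_
  · exact Eventually.of_forall fun ε => hg.aestronglyMeasurable.indicator (trunc_meas x ε)
  · exact Eventually.of_forall fun ε => Eventually.of_forall fun y => norm_indicator_le_norm_self _ _
  · refine Eventually.of_forall fun y => ?_
    by_cases hxy : y = x
    · subst hxy
      refine tendsto_const_nhds.congr fun ε => ?_
      by_cases h : y ∈ {y' : En n | ε < ‖y - y'‖}
      · rw [indicator_of_mem h]
      · rw [indicator_of_notMem h, hx]
    · have hp : 0 < ‖x - y‖ := norm_pos_iff.2 (sub_ne_zero.2 (Ne.symm hxy))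
      refine tendsto_const_nhds.congr' ?_
      filter_upwards [Ioo_mem_nhdsGT hp] with ε hε
      rw [indicator_of_mem]
      exact hε.2

lemma sing_intOn (hn : 1 ≤ n) (hs0 : 0 < s) (hs1 : s < 1) (x : En n) {ε : ℝ} (hε : 0 < ε) :
    IntegrableOn (fun y => ‖x - y‖ ^ (-((n : ℝ) + 2 * s))) {y : En n | ε < ‖x - y‖} := by
  have h1 : Integrable (fun y : En n => (min (ε ^ 2) 1)⁻¹ * Kd s (x - y)) :=
    ((Kd_int hn hs0 hs1).comp_sub_left x).const_mul _
  refine Integrable.mono' h1.integrableOn ?_ ?_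
  · have : Measurable (fun y : En n => ‖x - y‖ ^ (-((n : ℝ) + 2 * s))) := by fun_prop
    exact this.aestronglyMeasurable
  · rw [ae_restrict_iff' (trunc_meas x ε)]
    refine Eventually.of_forall fun y hy => ?_
    have hy : ε < ‖x - y‖ := hy
    rw [Real.norm_eq_abs, abs_of_nonneg (by positivity), Kd, inv_mul_eq_div,
      le_div_iff₀ (by positivity)]
    gcongr

lemma trunc_int (hn : 1 ≤ n) (hs0 : 0 < s) (hs1 : s < 1) (x : En n) {ε : ℝ} (hε : 0 < ε)
    {g : En n → ℝ} {C : ℝ} (hg : Continuous g) (hC : ∀ y, |g y| ≤ C) :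
    IntegrableOn (fun y => g y / ‖x - y‖ ^ ((n : ℝ) + 2 * s)) {y : En n | ε < ‖x - y‖} := by
  have := (sing_intOn hn hs0 hs1 x hε).mul_bdd (c := C) hg.aestronglyMeasurable
    (Eventually.of_forall hC)
  refine Integrable.congr this (Eventually.of_forall fun y => ?_)
  simp only
  rw [Real.rpow_neg (norm_nonneg _)]
  ring

lemma pv_exists (hn : 1 ≤ n) (hs0 : 0 < s) (hs1 : s < 1) (hu : IsTest u) (x : En n) :
    ∃ L, Tendsto (fun ε : ℝ => ∫ y in {y : En n | ε < ‖x - y‖},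
      (u x - u y) / ‖x - y‖ ^ ((n : ℝ) + 2 * s)) (𝓝[>] 0) (𝓝 L) := by
  obtain ⟨M, hM0, hM⟩ := hu.second
  obtain ⟨B, hB0, hB⟩ := hu.bdd
  have cu := hu.1.continuous
  set g : En n → ℝ := fun v => ‖x - v‖ ^ (-((n : ℝ) + 2 * s)) *
    (2 * u x - u v - u (x + (x - v))) with hgdef
  have hgi : Integrable g := by
    refine Integrable.mono' (((Kd_int hn hs0 hs1).comp_sub_left x).const_mul M) ?_ ?_
    · have h1 : Measurable (fun y : En n => ‖x - y‖ ^ (-((n : ℝ) + 2 * s))) := by fun_prop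
      have h2 : Measurable (fun v : En n => 2 * u x - u v - u (x + (x - v))) :=
        Continuous.measurable (by fun_prop)
      exact (h1.mul h2).aestronglyMeasurable
    · refine Eventually.of_forall fun v => ?_
      have h := hM x (x - v)
      rw [sub_sub_cancel] at h
      rw [Real.norm_eq_abs, hgdef, abs_mul, abs_of_nonneg (by positivity : 0 ≤ ‖x - v‖ ^ (-((n : ℝ) + 2 * s))),
        show 2 * u x - u v - u (x + (x - v)) = -(u v + u (x + (x - v)) - 2 * u x) by ring, abs_neg]
      calc _ ≤ ‖x - v‖ ^ (-((n : ℝ) + 2 * s)) * (M * min (‖x - v‖ ^ 2) 1) := by gcongr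
        _ = _ := by unfold Kd; ring
  have hlim := trunc_lim x hgi (by
    simp only [hgdef, sub_self, add_zero]; ring)
  refine ⟨(∫ y, g y) / 2, (hlim.div_const 2).congr' ?_⟩
  filter_upwards [self_mem_nhdsWithin] with ε hε
  have hε : 0 < ε := hε
  have bd : ∀ y, |u x - u y| ≤ 2 * B := fun y => by
    have := abs_sub (u x) (u y)
    linarith [hB x, hB y]
  have i1 := trunc_int hn hs0 hs1 x hε (g := fun y => u x - u y) (by fun_prop) bd
  have i2 := trunc_int hn hs0 hs1 x hε (g := fun y => u x - u (x + (x - y))) (by fun_prop)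
    (fun y => bd _)
  have e1 : ∫ y in {y : En n | ε < ‖x - y‖}, (u x - u (x + (x - y))) / ‖x - y‖ ^ ((n : ℝ) + 2 * s) =
      ∫ y in {y : En n | ε < ‖x - y‖}, (u x - u y) / ‖x - y‖ ^ ((n : ℝ) + 2 * s) := by
    rw [← integral_indicator (trunc_meas x _), ← integral_indicator (trunc_meas x _),
      ← integral_sub_left_eq_self (fun y => indicator {y : En n | ε < ‖x - y‖}
        (fun y => (u x - u y) / ‖x - y‖ ^ ((n : ℝ) + 2 * s)) y) volume (x + x)]
    congr 1; ext y
    have : ‖x - (x + x - y)‖ = ‖x - y‖ := by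
      rw [show x - (x + x - y) = -(x - y) by abel, norm_neg]
    simp only [indicator, mem_ofPred_eq, this]
    rw [add_sub_assoc]
  have e2 : ∫ y in {y : En n | ε < ‖x - y‖}, g y =
      ∫ y in {y : En n | ε < ‖x - y‖}, ((u x - u y) / ‖x - y‖ ^ ((n : ℝ) + 2 * s) +
        (u x - u (x + (x - y))) / ‖x - y‖ ^ ((n : ℝ) + 2 * s)) := by
    congr 1; ext y
    simp only [hgdef]
    rw [Real.rpow_neg (norm_nonneg _)]
    ring
  rw [e2, integral_add i1 i2, e1]
  ring

lemma breg_lim (hn : 1 ≤ n) (hs0 : 0 < s) (hs1 : s < 1) (hu : IsTest u) {f f1 f2 : ℝ → ℝ} {M K : ℝ}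
    (hM : ∀ y, |u y| ≤ M) (x : En n) (h : PsiD f f1 f2 (u x) M K) :
    Tendsto (fun ε : ℝ => ∫ y in {y : En n | ε < ‖x - y‖},
      ‖x - y‖ ^ (-((n : ℝ) + 2 * s)) * f (u y)) (𝓝[>] 0)
      (𝓝 (∫ y, ‖x - y‖ ^ (-((n : ℝ) + 2 * s)) * f (u y))) := by
  obtain ⟨M1, hM10, hM1⟩ := hu.first
  have hK := h.K0
  refine trunc_lim x ?_ (by simp [h.z0])
  refine Integrable.mono' (((Kd_int hn hs0 hs1).comp_sub_left x).const_mul (K * M1)) ?_ ?_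
  · have h1 : Measurable (fun y : En n => ‖x - y‖ ^ (-((n : ℝ) + 2 * s))) := by fun_prop
    have h2 : Measurable (fun v : En n => f (u v)) := (h.c0.comp hu.1.continuous).measurable
    exact (h1.mul h2).aestronglyMeasurable
  · refine Eventually.of_forall fun y => ?_
    rw [Real.norm_eq_abs, abs_mul, abs_of_nonneg (by positivity : 0 ≤ ‖x - y‖ ^ (-((n : ℝ) + 2 * s)))]
    have h3 := h.b0 (u y) (hM y)
    have h4 := hM1 x y
    calc _ ≤ ‖x - y‖ ^ (-((n : ℝ) + 2 * s)) * (K * (M1 * min (‖x - y‖ ^ 2) 1)) := by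
          have h5 : |f (u y)| ≤ K * (M1 * min (‖x - y‖ ^ 2) 1) := h3.trans (by gcongr)
          gcongr
      _ = _ := by unfold Kd; ring

lemma const_rel (n : ℕ) (hs0 : 0 < s) (hs1 : s < 1) : betaS s * (2 * s * pns n s) = Cns n s := by
  have h1 : Real.Gamma (1 - s) = -s * Real.Gamma (-s) := by
    rw [← Real.Gamma_add_one (by linarith : -s ≠ 0)]; congr 1; ring
  have h2 : 0 < Real.Gamma (1 - s) := Real.Gamma_pos_of_pos (by linarith)
  have h3 : |Real.Gamma (-s)| = Real.Gamma (1 - s) / s := by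
    rw [eq_div_iff hs0.ne', abs_of_neg (by nlinarith), h1]; ring
  have h4 : 0 < Real.Gamma s := Real.Gamma_pos_of_pos hs0
  have h5 : (2:ℝ) ^ (2 * s - 1) = 4 ^ s / 2 := by
    rw [Real.rpow_sub_one (by norm_num), Real.rpow_mul (by norm_num)]; norm_num
  have h6 : 0 < Real.pi ^ ((n : ℝ) / 2) := by positivity
  unfold betaS pns Cns
  rw [h3, h5]
  field_simp

lemma lhs_eq (hn : 1 ≤ n) (hs0 : 0 < s) (hs1 : s < 1) (hu : IsTest u) {q : ℝ} (hq : 2 ≤ q)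
    (x : En n) :
    (1 / q) * Lam n s (fun y => |u y| ^ q) x - |u x| ^ (q - 2) * u x * Lam n s u x =
      Cns n s * ∫ y, ‖x - y‖ ^ (-((n : ℝ) + 2 * s)) * breg q (u x) (u y) := by
  obtain ⟨M, hM0, hM⟩ := hu.bdd
  have h := breg_psi hq (hM x) hM0
  have hK := h.K0
  obtain ⟨L, hL⟩ := pv_exists hn hs0 hs1 hu x
  have hB := breg_lim hn hs0 hs1 hu hM x h
  set I := ∫ y, ‖x - y‖ ^ (-((n : ℝ) + 2 * s)) * breg q (u x) (u y) with hI
  have hq0 : q ≠ 0 := by linarith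
  have cu := hu.1.continuous
  have hcomb : Tendsto (fun ε : ℝ => ∫ y in {y : En n | ε < ‖x - y‖},
      (|u x| ^ q - |u y| ^ q) / ‖x - y‖ ^ ((n : ℝ) + 2 * s)) (𝓝[>] 0)
      (𝓝 (-q * I + q * (|u x| ^ (q - 2) * u x) * L)) := by
    refine ((hB.const_mul (-q)).add (hL.const_mul (q * (|u x| ^ (q - 2) * u x)))).congr' ?_
    filter_upwards [self_mem_nhdsWithin] with ε hε
    have hε : 0 < ε := hε
    have bd : ∀ y, |u x - u y| ≤ 2 * M := fun y => by
      have := abs_sub (u x) (u y)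
      linarith [hM x, hM y]
    have i1 := trunc_int hn hs0 hs1 x hε (g := fun y => u x - u y) (by fun_prop) bd
    have i2 := trunc_int hn hs0 hs1 x hε (g := fun y => breg q (u x) (u y))
      (C := (q - 1) * M ^ (q - 2) * (2 * M) ^ 2) (h.c0.comp cu) (fun y => by
        refine (h.b0 _ (hM y)).trans ?_
        have := bd y
        rw [abs_sub_comm] at this
        gcongr)
    have e1 : ∫ y in {y : En n | ε < ‖x - y‖}, ‖x - y‖ ^ (-((n : ℝ) + 2 * s)) * breg q (u x) (u y)
        = ∫ y in {y : En n | ε < ‖x - y‖}, breg q (u x) (u y) / ‖x - y‖ ^ ((n : ℝ) + 2 * s) := by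
      congr 1; ext y
      rw [Real.rpow_neg (norm_nonneg _)]; ring
    rw [e1, ← integral_const_mul, ← integral_const_mul,
      ← integral_add (i2.const_mul _) (i1.const_mul _)]
    congr 1; ext y
    unfold breg
    field_simp
    ring
  unfold Lam fracLap
  rw [hcomb.limUnder_eq, hL.limUnder_eq]
  field_simp
  ring

end

/-- **Pointwise Stroock–Varopoulos identity** (Corollary, Euclidean case): for `q ≥ 2`,
`(1/q) Λ^s(|u|^q) - |u|^{q-2} u Λ^s u
  = (4(q-1)/q²) β_s ∫₀^∞ (P_z^{(s)} ∗ ((q²/4)|U|^{q-2}|∇̃U|²))(x) z^{1-2s} dz`. -/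
theorem pointwise_Stroock_Varopoulos (n : ℕ) (hn : 1 ≤ n) (s : ℝ) (hs0 : 0 < s) (hs1 : s < 1)
    (q : ℝ) (hq : 2 ≤ q)
    (u : En n → ℝ) (hu : ContDiff ℝ (⊤ : ℕ∞) u) (huc : HasCompactSupport u) :
    ∀ x : En n,
      (1 / q) * Lam n s (fun y => |u y| ^ q) x - |u x| ^ (q - 2) * u x * Lam n s u x =
        (4 * (q - 1) / q ^ 2) * betaS s *
          ∫ z in Ioi (0 : ℝ),
            Pconv n s z
              (fun y =>
                (q ^ 2 / 4) * |CSext n s u y z| ^ (q - 2) *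
                  ((∑ i, (pd i (fun y' => CSext n s u y' z) y) ^ 2)
                    + (deriv (CSext n s u y) z) ^ 2)) x
              * z ^ (1 - 2 * s) := by
  intro x
  have hu' : IsTest u := ⟨hu, huc⟩
  obtain ⟨M, hM0, hM⟩ := hu'.bdd
  have hE := energy hn hs0 hs1 hu' hM x (breg_psi hq (hM x) hM0)
  rw [lhs_eq hn hs0 hs1 hu' hq x, ← const_rel n hs0 hs1, mul_assoc, ← hE,
    mul_comm (4 * (q - 1) / q ^ 2), mul_assoc]
  congr 1
  rw [← integral_const_mul]
  refine setIntegral_congr_fun measurableSet_Ioi fun z hz => ?_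
  have hz : 0 < z := hz
  have hU : ∀ z y, CSext n s u y z = cv (pk s z) u y := fun z y => by
    rw [CSext, Pconv, Pker_eq, cv_eq]
  have hd : ∀ y, deriv (CSext n s u y) z = z ^ (2 * s - 1) * cv (ek s z) u y := fun y => by
    rw [show CSext n s u y = fun z => cv (pk s z) u y from funext fun z => hU z y]
    exact (cv_pk_deriv hs0 hu' hz y).deriv
  have hp : ∀ i y, pd i (fun y' => CSext n s u y' z) y = cv (pk s z) (pd i u) y := fun i y => by
    rw [show (fun y' => CSext n s u y' z) = cv (pk s z) u from funext fun y => hU z y]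
    exact U_pd hs0 hu' hz y i
  have hq0 : q ≠ 0 := by linarith
  simp only [Pconv, Pker_eq, hd, hp]
  rw [mul_comm _ (z ^ (1 - 2 * s)), ← mul_assoc, mul_comm _ (z ^ (1 - 2 * s)), mul_assoc]
  rw [← integral_const_mul (4 * (q - 1) / q ^ 2)]
  refine congrArg (fun t => z ^ (1 - 2 * s) * t) (integral_congr_ae (Eventually.of_forall fun y => ?_))
  simp only [Gd, hU]
  field_simp
end
end

section
/- Let s ∈ (0,1), u ∈ C_c^∞(ℝⁿ), and let U be its Caffarelli–Silvestre extension. Then ∫₀^∞∫_{ℝⁿ} z^{1−2s} |∇_x ∂_z U(x,z)|² dx dz < ∞. -/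
open MeasureTheory Filter Set
open scoped Topology ENNReal NNReal

noncomputable section

/-- The basic profile `(|y|² + z²)^{-r/2}`. -/
def Qk (n : ℕ) (r z : ℝ) (y : En n) : ℝ := (‖y‖ ^ 2 + z ^ 2) ^ (-r / 2)

/-- The `z`-derivative of the Poisson kernel. -/
def Kker (n : ℕ) (s z : ℝ) (x : En n) : ℝ :=
  pns n s * (2 * s * z ^ (2 * s - 1)) * (‖x‖ ^ 2 + z ^ 2) ^ (-((n : ℝ) + 2 * s) / 2)
  + pns n s * z ^ (2 * s) * ((2 * z) * (-((n : ℝ) + 2 * s) / 2) *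
      (‖x‖ ^ 2 + z ^ 2) ^ (-((n : ℝ) + 2 * s) / 2 - 1))

lemma base_pos {n : ℕ} {z : ℝ} (hz : 0 < z) (y : En n) : 0 < ‖y‖ ^ 2 + z ^ 2 := by positivity

lemma Qk_eq {n : ℕ} (r : ℝ) {z : ℝ} (hz : 0 < z) (y : En n) :
    Qk n r z y = z ^ (-r) * ((1 : ℝ) + ‖z⁻¹ • y‖ ^ 2) ^ (-r / 2) := by
  have h1 : ‖y‖ ^ 2 + z ^ 2 = z ^ 2 * (1 + ‖z⁻¹ • y‖ ^ 2) := by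
    rw [norm_smul, norm_inv, Real.norm_of_nonneg hz.le]; field_simp; ring
  rw [Qk, h1, Real.mul_rpow (by positivity) (by positivity)]
  congr 1
  rw [← Real.rpow_natCast, ← Real.rpow_mul hz.le]; congr 1; push_cast; ring

lemma Qk_integrable {n : ℕ} {r z : ℝ} (hr : (n : ℝ) < r) (hz : 0 < z) :
    Integrable (Qk n r z) := by
  have h := integrable_rpow_neg_one_add_norm_sq (E := En n) (μ := volume) (r := r) (by simpa using hr)
  have := (h.comp_smul (inv_ne_zero hz.ne')).const_mul (z ^ (-r))
  exact this.congr (Eventually.of_forall fun y => (Qk_eq r hz y).symm)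

lemma Qk_integral {n : ℕ} (r : ℝ) {z : ℝ} (hz : 0 < z) :
    ∫ y, Qk n r z y = z ^ ((n : ℝ) - r) * ∫ y : En n, ((1 : ℝ) + ‖y‖ ^ 2) ^ (-r / 2) := by
  simp_rw [Qk_eq r hz]
  rw [integral_const_mul, Measure.integral_comp_inv_smul_of_nonneg (μ := (volume : Measure (En n)))
    (fun y : En n => ((1 : ℝ) + ‖y‖ ^ 2) ^ (-r / 2)) hz.le]
  rw [finrank_euclideanSpace_fin, smul_eq_mul, ← mul_assoc, ← Real.rpow_natCast, ← Real.rpow_add hz]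
  congr 2; ring

lemma Qk_nonneg {n : ℕ} (r z : ℝ) (y : En n) : 0 ≤ Qk n r z y := by
  unfold Qk; positivity

lemma Qk_continuous {n : ℕ} (r : ℝ) {z : ℝ} (hz : 0 < z) : Continuous (Qk n r z) := by
  unfold Qk
  exact Continuous.rpow_const (by fun_prop) (fun y => Or.inl (base_pos hz y).ne')

lemma Pker_eq_s15 (n : ℕ) (s z : ℝ) (x : En n) :
    Pker n s z x = pns n s * z ^ (2 * s) * Qk n (n + 2 * s) z x := rfl

lemma Kker_continuous {n : ℕ} (s : ℝ) {z : ℝ} (hz : 0 < z) : Continuous (Kker n s z) := by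
  unfold Kker
  have h : ∀ q : ℝ, Continuous fun x : En n => (‖x‖ ^ 2 + z ^ 2) ^ q := fun q =>
    Continuous.rpow_const (by fun_prop) (fun y => Or.inl (base_pos hz y).ne')
  have h1 := h (-((n : ℝ) + 2 * s) / 2)
  have h2 := h (-((n : ℝ) + 2 * s) / 2 - 1)
  fun_prop

lemma Pker_hasDerivAt {n : ℕ} (s : ℝ) {z : ℝ} (hz : 0 < z) (x : En n) :
    HasDerivAt (fun t => Pker n s t x) (Kker n s z x) z := by
  unfold Pker Kker
  have h1 : HasDerivAt (fun t : ℝ => t ^ (2 * s)) (2 * s * z ^ (2 * s - 1)) z :=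
    Real.hasDerivAt_rpow_const (Or.inl hz.ne')
  have h2 : HasDerivAt (fun t : ℝ => ‖x‖ ^ 2 + t ^ 2) (2 * z) z := by
    simpa using (hasDerivAt_pow 2 z).const_add (‖x‖ ^ 2)
  have h3 := h2.rpow_const (p := -((n : ℝ) + 2 * s) / 2) (Or.inl (base_pos hz x).ne')
  exact (h1.const_mul (pns n s)).mul h3

/-- Constant in the kernel bound. -/
def Ckb (n : ℕ) (s : ℝ) : ℝ := |pns n s| * (n + 4 * s)

lemma Kker_bound {n : ℕ} {s : ℝ} (hs : 0 < s) {z : ℝ} (hz : 0 < z) (x : En n) :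
    |Kker n s z x| ≤ Ckb n s * z ^ (2 * s - 1) * Qk n (n + 2 * s) z x := by
  have hb := base_pos hz x
  have e1 : (‖x‖ ^ 2 + z ^ 2) ^ (-((n : ℝ) + 2 * s) / 2 - 1) =
      Qk n (n + 2 * s) z x / (‖x‖ ^ 2 + z ^ 2) := by
    rw [Real.rpow_sub hb, Real.rpow_one]; rfl
  have e2 : z ^ (2 * s) = z ^ (2 * s - 1) * z := by
    rw [Real.rpow_sub hz, Real.rpow_one]; field_simp
  have e3 : Kker n s z x = pns n s * (z ^ (2 * s - 1) * Qk n (n + 2 * s) z x) *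
      (2 * s - (n + 2 * s) * (z ^ 2 / (‖x‖ ^ 2 + z ^ 2))) := by
    unfold Kker
    rw [e1, e2]
    change _ * _ * Qk n (n + 2 * s) z x + _ = _
    field_simp
    ring
  have h0 : 0 ≤ z ^ (2 * s - 1) * Qk n (n + 2 * s) z x :=
    mul_nonneg (by positivity) (Qk_nonneg _ _ _)
  have t0 : 0 ≤ z ^ 2 / (‖x‖ ^ 2 + z ^ 2) := by positivity
  have t1 : z ^ 2 / (‖x‖ ^ 2 + z ^ 2) ≤ 1 := by
    rw [div_le_one hb]; nlinarith [sq_nonneg ‖x‖]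
  have hn : (0 : ℝ) ≤ n := Nat.cast_nonneg n
  have h4 : |2 * s - (n + 2 * s) * (z ^ 2 / (‖x‖ ^ 2 + z ^ 2))| ≤ n + 4 * s := by
    rw [abs_le]; constructor <;> nlinarith [mul_nonneg (add_nonneg hn (by positivity : 0 ≤ 2 * s)) t0,
      mul_le_mul_of_nonneg_left t1 (add_nonneg hn (by positivity : 0 ≤ 2 * s))]
  rw [e3, abs_mul, abs_mul, abs_of_nonneg h0]
  calc _ ≤ |pns n s| * (z ^ (2 * s - 1) * Qk n (n + 2 * s) z x) * (n + 4 * s) := by gcongr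
    _ = _ := by unfold Ckb; ring

lemma Ckb_nonneg (n : ℕ) {s : ℝ} (hs : 0 < s) : 0 ≤ Ckb n s := by unfold Ckb; positivity

lemma Pker_conv_hasDerivAt {n : ℕ} {s : ℝ} (hs : 0 < s) {z : ℝ} (hz : 0 < z)
    (g : En n → ℝ) (hg : Continuous g) (A : ℝ) (hA : ∀ y, |g y| ≤ A) (x : En n) :
    Integrable (fun y => Kker n s z (x - y) * g y) ∧
    HasDerivAt (fun t => ∫ y, Pker n s t (x - y) * g y) (∫ y, Kker n s z (x - y) * g y) z := by
  have hr : (n : ℝ) < n + 2 * s := by linarith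
  have hA0 : 0 ≤ A := (abs_nonneg _).trans (hA 0)
  have hPc : ∀ t, 0 < t → Continuous fun y => Pker n s t (x - y) * g y := by
    intro t ht
    have := Qk_continuous (n := n) (n + 2 * s) ht
    simp_rw [Pker_eq_s15]
    fun_prop
  have hKc : Continuous fun y => Kker n s z (x - y) * g y := by
    have := Kker_continuous (n := n) s hz
    fun_prop
  have hs' : Ioo (z / 2) (2 * z) ∈ 𝓝 z := Ioo_mem_nhds (by linarith) (by linarith)
  have hQi : ∀ t, 0 < t → Integrable (fun y => Qk n (n + 2 * s) t (x - y)) := fun t ht =>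
    (Qk_integrable hr ht).comp_sub_left x
  refine hasDerivAt_integral_of_dominated_loc_of_deriv_le (s := Ioo (z / 2) (2 * z))
    (F' := fun t y => Kker n s t (x - y) * g y)
    (bound := fun y => Ckb n s * ((2 * z) ^ (2 * s) / (z / 2)) * A * Qk n (n + 2 * s) (z / 2) (x - y))
    hs' ?_ ?_ hKc.aestronglyMeasurable ?_ ((hQi _ (by positivity)).const_mul _) ?_
  · filter_upwards [lt_mem_nhds hz] with t ht using (hPc t ht).aestronglyMeasurable
  · refine ((hQi z hz).const_mul (|pns n s| * z ^ (2 * s) * A)).mono'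
      (hPc z hz).aestronglyMeasurable (Eventually.of_forall fun y => ?_)
    rw [Pker_eq_s15, Real.norm_eq_abs, abs_mul, abs_mul, abs_mul, abs_of_nonneg (Qk_nonneg _ _ _),
      abs_of_nonneg (by positivity : 0 ≤ z ^ (2 * s))]
    have := hA y
    have := Qk_nonneg (n + 2 * s) z (x - y)
    calc _ ≤ |pns n s| * z ^ (2 * s) * Qk n (n + 2 * s) z (x - y) * A := by gcongr
      _ = _ := by ring
  · refine Eventually.of_forall fun y t ht => ?_
    have ht0 : 0 < t := by linarith [ht.1]
    rw [Real.norm_eq_abs, abs_mul]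
    have h1 : t ^ (2 * s - 1) ≤ (2 * z) ^ (2 * s) / (z / 2) := by
      rw [Real.rpow_sub ht0, Real.rpow_one]
      have := ht.1.le
      have := ht.2.le
      gcongr
    have h2 : Qk n (n + 2 * s) t (x - y) ≤ Qk n (n + 2 * s) (z / 2) (x - y) := by
      unfold Qk
      apply Real.rpow_le_rpow_of_nonpos (base_pos (by positivity) _)
      · have := ht.1.le
        gcongr
      · have : (0 : ℝ) ≤ n := Nat.cast_nonneg n
        linarith
    have h3 := Ckb_nonneg n hs
    have h4 := Qk_nonneg (n + 2 * s) t (x - y)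
    calc _ ≤ Ckb n s * t ^ (2 * s - 1) * Qk n (n + 2 * s) t (x - y) * A := by
          gcongr
          · exact Kker_bound hs ht0 _
          · exact hA y
      _ ≤ Ckb n s * ((2 * z) ^ (2 * s) / (z / 2)) * Qk n (n + 2 * s) (z / 2) (x - y) * A := by
          gcongr
      _ = _ := by ring
  · refine Eventually.of_forall fun y t ht => ?_
    exact (Pker_hasDerivAt s (by linarith [ht.1]) (x - y)).mul_const (g y)

lemma Kker_integral_zero {n : ℕ} {s : ℝ} (hs : 0 < s) {z : ℝ} (hz : 0 < z) :
    Integrable (Kker n s z) ∧ ∫ y, Kker n s z y = 0 := by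
  obtain ⟨h0, h⟩ := Pker_conv_hasDerivAt hs hz (fun _ : En n => (1 : ℝ)) continuous_const 1
    (by simp) 0
  have hi : Integrable (Kker n s z) := by
    have := h0.comp_neg
    simpa using this
  refine ⟨hi, ?_⟩
  have e : ∫ y, Kker n s z (0 - y) * 1 = ∫ y, Kker n s z y := by
    simp_rw [mul_one]
    exact integral_sub_left_eq_self (Kker n s z) volume 0
  rw [e] at h
  have hconst : (fun t => ∫ y : En n, Pker n s t (0 - y) * 1) =ᶠ[𝓝 z]
      fun _ => pns n s * ∫ y : En n, ((1 : ℝ) + ‖y‖ ^ 2) ^ (-((n : ℝ) + 2 * s) / 2) := by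
    filter_upwards [lt_mem_nhds hz] with t ht
    simp_rw [mul_one]
    rw [integral_sub_left_eq_self (Pker n s t) volume 0]
    simp_rw [Pker_eq_s15]
    rw [integral_const_mul, Qk_integral _ ht]
    have : t ^ (2 * s) * t ^ ((n : ℝ) - (n + 2 * s)) = 1 := by
      rw [← Real.rpow_add ht]; ring_nf; simp
    linear_combination (pns n s * ∫ y : En n, ((1 : ℝ) + ‖y‖ ^ 2) ^ (-((n : ℝ) + 2 * s) / 2)) * this
  exact (h.congr_of_eventuallyEq hconst.symm).unique (hasDerivAt_const _ _)

lemma mixed_eq {n : ℕ} {s : ℝ} (hs : 0 < s) {u : En n → ℝ} (hu : ContDiff ℝ (⊤ : ℕ∞) u)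
    (huc : HasCompactSupport u) (i : Fin n) {z : ℝ} (hz : 0 < z) (x : En n) :
    pd i (fun y => deriv (CSext n s u y) z) x =
      ∫ t, Kker n s z t * (pd i u (x - t) - pd i u x) := by
  have hu1 : ContDiff ℝ 1 u := hu.of_le (by exact_mod_cast le_top)
  obtain ⟨A, hA⟩ := huc.exists_bound_of_continuous hu.continuous
  obtain ⟨hKi, hK0⟩ := Kker_integral_zero (n := n) hs hz
  have hfun : (fun y => deriv (CSext n s u y) z) =
      convolution (Kker n s z) u (ContinuousLinearMap.lsmul ℝ ℝ) volume := by
    funext y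
    have h := (Pker_conv_hasDerivAt hs hz u hu.continuous A (by simpa using hA) y).2
    have h' : deriv (CSext n s u y) z = ∫ w, Kker n s z (y - w) * u w := h.deriv
    rw [h', convolution, ← integral_sub_left_eq_self _ volume y]
    simp
  have hKl : LocallyIntegrable (Kker n s z) volume := hKi.locallyIntegrable
  have hfc : Continuous (fderiv ℝ u) := hu1.continuous_fderiv one_ne_zero
  have hD := huc.hasFDerivAt_convolution_right (ContinuousLinearMap.lsmul ℝ ℝ) hKl hu1 x
  have hfi : Continuous (pd i u) := by unfold pd; fun_prop
  rw [pd, hfun, hD.fderiv, convolution_precompR_apply _ hKl (huc.fderiv ℝ) hfc, convolution]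
  have hcs : HasCompactSupport (pd i u) := by
    refine (huc.fderiv ℝ).comp_left (g := fun l => l (EuclideanSpace.single i 1)) ?_
    simp
  obtain ⟨A', hA'⟩ := hcs.exists_bound_of_continuous hfi
  have hI1 : Integrable (fun t => Kker n s z t * pd i u (x - t)) := by
    refine hKi.mul_bdd (c := A') (by fun_prop) (Eventually.of_forall fun t => hA' _)
  simp_rw [mul_sub]
  rw [integral_sub hI1 (hKi.mul_const _), integral_mul_const, hK0]
  simp [pd]

lemma holder_aux {n : ℕ} {f : En n → ℝ} (hf : ContDiff ℝ 1 f) (hfc : HasCompactSupport f)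
    {a : ℝ} (ha0 : 0 ≤ a) (ha1 : a ≤ 1) :
    ∃ L : ℝ, 0 ≤ L ∧ ∀ x t, |f (x - t) - f x| ≤ L * ‖t‖ ^ a := by
  obtain ⟨A, hA⟩ := hfc.exists_bound_of_continuous hf.continuous
  obtain ⟨C, hC⟩ := hf.lipschitzWith_of_hasCompactSupport hfc one_ne_zero
  have hA0 : 0 ≤ A := (norm_nonneg _).trans (hA 0)
  refine ⟨2 * A + C, by positivity, fun x t => ?_⟩
  have h1 : |f (x - t) - f x| ≤ 2 * A := by
    have := hA (x - t)
    have := hA x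
    rw [Real.norm_eq_abs] at *
    exact (abs_sub _ _).trans (by linarith)
  have h2 : |f (x - t) - f x| ≤ C * ‖t‖ := by
    have := hC.dist_le_mul (x - t) x
    rw [Real.dist_eq, dist_eq_norm] at this
    simpa using this
  have hC0 : (0 : ℝ) ≤ C := C.2
  rcases le_total ‖t‖ 1 with h | h
  · have : ‖t‖ ≤ ‖t‖ ^ a := by
      rcases (norm_nonneg t).eq_or_lt with h0 | h0
      · rw [← h0]; positivity
      · simpa using Real.rpow_le_rpow_of_exponent_ge h0 h ha1
    calc _ ≤ C * ‖t‖ := h2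
      _ ≤ C * ‖t‖ ^ a := by gcongr
      _ ≤ _ := by gcongr; linarith
  · have : 1 ≤ ‖t‖ ^ a := Real.one_le_rpow h ha0
    nlinarith

lemma energy_bound {n : ℕ} {s : ℝ} (hs : 0 < s) {f : En n → ℝ} (hf : ContDiff ℝ 1 f)
    (hfc : HasCompactSupport f) {a : ℝ} (ha0 : 0 ≤ a) (ha1 : a ≤ 1) (ha2 : a < 2 * s) :
    ∃ C : ℝ, 0 ≤ C ∧ ∀ z, 0 < z → ∀ G : En n → ℝ, Measurable G →
      (∀ x, G x = ∫ t, Kker n s z t * (f (x - t) - f x)) →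
      ∫⁻ x, ENNReal.ofReal (G x ^ 2) ≤ ENNReal.ofReal (C * z ^ (2 * a - 2)) := by
  obtain ⟨L, hL0, hL⟩ := holder_aux hf hfc ha0 ha1
  set r : ℝ := n + 2 * s - a with hr
  set J : ℝ := ∫ y : En n, ((1 : ℝ) + ‖y‖ ^ 2) ^ (-r / 2) with hJ
  have hJ0 : 0 ≤ J := integral_nonneg fun y => by positivity
  set B : Set (En n) := tsupport f with hB
  have hBm : MeasurableSet B := (isClosed_tsupport f).measurableSet
  have hBfin : volume B ≠ ⊤ := hfc.isCompact.measure_ne_top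
  set ib : En n → ℝ≥0∞ := B.indicator 1 with hib
  have hibm : Measurable ib := measurable_one.indicator hBm
  have hCk := Ckb_nonneg n hs
  refine ⟨(Ckb n s * L * J) ^ 2 * (2 * (volume B).toReal), by positivity, ?_⟩
  intro z hz G hGm hG
  set k : En n → ℝ≥0∞ := fun t => ENNReal.ofReal (Ckb n s * z ^ (2 * s - 1) * L * Qk n r z t)
    with hk
  have hkm : Measurable k := by
    have := (Qk_continuous (n := n) r hz).measurable
    fun_prop
  set M : ℝ := Ckb n s * L * J * z ^ (a - 1) with hM
  have hM0 : 0 ≤ M := by positivity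
  have hkM : ∫⁻ t, k t = ENNReal.ofReal M := by
    rw [hk, ← ofReal_integral_eq_lintegral_ofReal ((Qk_integrable (by rw [hr]; linarith) hz).const_mul _)
      (Eventually.of_forall fun t => mul_nonneg (by positivity) (Qk_nonneg _ _ _))]
    rw [integral_const_mul, Qk_integral r hz]
    congr 1
    have : z ^ (2 * s - 1) * z ^ ((n : ℝ) - r) = z ^ (a - 1) := by
      rw [← Real.rpow_add hz]; congr 1; rw [hr]; ring
    rw [hM, ← this]; ring
  have hkb : ∀ x t, ‖Kker n s z t * (f (x - t) - f x)‖ₑ ≤ k t := by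
    intro x t
    rw [Real.enorm_eq_ofReal_abs]
    apply ENNReal.ofReal_le_ofReal
    rw [abs_mul]
    have h1 := Kker_bound hs hz t
    have h2 := hL x t
    have h3 : Qk n (n + 2 * s) z t * ‖t‖ ^ a ≤ Qk n r z t := by
      have hb := base_pos hz t
      have : ‖t‖ ^ a ≤ (‖t‖ ^ 2 + z ^ 2) ^ (a / 2) := by
        calc ‖t‖ ^ a = (‖t‖ ^ 2) ^ (a / 2) := by
              rw [← Real.rpow_natCast, ← Real.rpow_mul (norm_nonneg t)]; congr 1; push_cast; ring
          _ ≤ _ := by gcongr; nlinarith [sq_nonneg z]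
      calc _ ≤ Qk n (n + 2 * s) z t * (‖t‖ ^ 2 + z ^ 2) ^ (a / 2) := by
            have := Qk_nonneg (n + 2 * s) z t
            gcongr
        _ = _ := by
            unfold Qk
            rw [← Real.rpow_add hb]; congr 1; rw [hr]; ring
    calc _ ≤ (Ckb n s * z ^ (2 * s - 1) * Qk n (n + 2 * s) z t) * (L * ‖t‖ ^ a) := by
          gcongr
          exact mul_nonneg (by positivity) (Qk_nonneg _ _ _)
      _ = (Ckb n s * z ^ (2 * s - 1) * L) * (Qk n (n + 2 * s) z t * ‖t‖ ^ a) := by ring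
      _ ≤ _ := by gcongr
  have hkb2 : ∀ x t, ‖Kker n s z t * (f (x - t) - f x)‖ₑ ≤ k t * (ib x + ib (x - t)) := by
    intro x t
    by_cases h1 : x ∈ B
    · refine (hkb x t).trans ?_
      have : ib x = 1 := by simp [hib, h1]
      rw [this]
      exact le_mul_of_one_le_right' (le_self_add)
    · by_cases h2 : x - t ∈ B
      · refine (hkb x t).trans ?_
        have : ib (x - t) = 1 := by simp [hib, h2]
        rw [this]
        exact le_mul_of_one_le_right' (le_add_self)
      · rw [image_eq_zero_of_notMem_tsupport h1, image_eq_zero_of_notMem_tsupport h2]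
        simp
  have hGsup : ∀ x, ‖G x‖ₑ ≤ ENNReal.ofReal M := by
    intro x
    rw [hG, ← hkM]
    exact (enorm_integral_le_lintegral_enorm _).trans (lintegral_mono (hkb x))
  have hibint : ∫⁻ x, ib x = volume B := by
    rw [hib, lintegral_indicator_one hBm]
  have hG1 : ∫⁻ x, ‖G x‖ₑ ≤ ENNReal.ofReal M * (2 * volume B) := by
    calc ∫⁻ x, ‖G x‖ₑ ≤ ∫⁻ x, ∫⁻ t, k t * (ib x + ib (x - t)) := by
          refine lintegral_mono fun x => ?_
          rw [hG]
          exact (enorm_integral_le_lintegral_enorm _).trans (lintegral_mono (hkb2 x))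
      _ = ∫⁻ t, ∫⁻ x, k t * (ib x + ib (x - t)) := by
          apply lintegral_lintegral_swap
          apply Measurable.aemeasurable
          unfold Function.uncurry
          fun_prop
      _ = ∫⁻ t, k t * (2 * volume B) := by
          refine lintegral_congr fun t => ?_
          rw [lintegral_const_mul _ (by fun_prop), lintegral_add_left hibm,
            lintegral_sub_right_eq_self ib t, hibint, two_mul]
      _ = _ := by rw [lintegral_mul_const _ hkm, hkM]
  calc ∫⁻ x, ENNReal.ofReal (G x ^ 2) ≤ ∫⁻ x, ENNReal.ofReal M * ‖G x‖ₑ := by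
        refine lintegral_mono fun x => ?_
        have : ENNReal.ofReal (G x ^ 2) = ‖G x‖ₑ * ‖G x‖ₑ := by
          rw [Real.enorm_eq_ofReal_abs, ← ENNReal.ofReal_mul (abs_nonneg _), abs_mul_abs_self, sq]
        rw [this]
        gcongr
        exact hGsup x
    _ = ENNReal.ofReal M * ∫⁻ x, ‖G x‖ₑ := lintegral_const_mul _ (by fun_prop)
    _ ≤ ENNReal.ofReal M * (ENNReal.ofReal M * (2 * volume B)) := by gcongr
    _ = ENNReal.ofReal (M * (M * (2 * (volume B).toReal))) := by
        rw [ENNReal.ofReal_mul (p := M) hM0, ENNReal.ofReal_mul (p := M) hM0,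
          ENNReal.ofReal_mul (p := 2) (by norm_num), ENNReal.ofReal_toReal hBfin]
        simp
    _ = _ := by
        congr 1
        have : z ^ (2 * a - 2) = z ^ (a - 1) * z ^ (a - 1) := by
          rw [← Real.rpow_add hz]; congr 1; ring
        rw [this, hM]; ring

lemma slice_bound {n : ℕ} {s : ℝ} (hs : 0 < s) {u : En n → ℝ} (hu : ContDiff ℝ (⊤ : ℕ∞) u)
    (huc : HasCompactSupport u) {a : ℝ} (ha0 : 0 ≤ a) (ha1 : a ≤ 1) (ha2 : a < 2 * s) :
    ∃ C : ℝ, 0 ≤ C ∧ ∀ z, 0 < z →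
      ∫⁻ x, ENNReal.ofReal (z ^ (1 - 2 * s) *
          ∑ i, (pd i (fun y => deriv (CSext n s u y) z) x) ^ 2) ≤
        ENNReal.ofReal (C * z ^ (2 * a - 2 * s - 1)) := by
  have H : ∀ i : Fin n, ∃ C : ℝ, 0 ≤ C ∧ ∀ z, 0 < z →
      ∫⁻ x, ENNReal.ofReal ((pd i (fun y => deriv (CSext n s u y) z) x) ^ 2) ≤
        ENNReal.ofReal (C * z ^ (2 * a - 2)) := by
    intro i
    have hfi : ContDiff ℝ 1 (pd i u) := by
      unfold pd
      exact ((contDiff_infty.1 hu 2).fderiv_right (m := 1) (by norm_num)).clm_apply contDiff_const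
    have hcs : HasCompactSupport (pd i u) := by
      refine (huc.fderiv ℝ).comp_left (g := fun l => l (EuclideanSpace.single i 1)) ?_
      simp
    obtain ⟨C, hC0, hC⟩ := energy_bound hs hfi hcs ha0 ha1 ha2
    refine ⟨C, hC0, fun z hz => hC z hz _ ?_ (mixed_eq hs hu huc i hz)⟩
    exact measurable_fderiv_apply_const ℝ _ _
  choose C hC0 hC using H
  refine ⟨∑ i, C i, Finset.sum_nonneg fun i _ => hC0 i, fun z hz => ?_⟩
  have hm : ∀ i : Fin n, Measurable fun x =>
      ENNReal.ofReal ((pd i (fun y => deriv (CSext n s u y) z) x) ^ 2) := fun i =>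
    ((measurable_fderiv_apply_const ℝ _ _).pow_const 2).ennreal_ofReal
  have hz1 : 0 ≤ z ^ (1 - 2 * s) := by positivity
  simp_rw [ENNReal.ofReal_mul hz1,
    ENNReal.ofReal_sum_of_nonneg (fun i (_ : i ∈ Finset.univ) => sq_nonneg
      (pd i (fun y => deriv (CSext n s u y) z) _))]
  rw [lintegral_const_mul _ (Finset.measurable_sum _ fun i _ => hm i),
    lintegral_finsetSum _ (fun i _ => hm i)]
  calc _ ≤ ENNReal.ofReal (z ^ (1 - 2 * s)) * ∑ i, ENNReal.ofReal (C i * z ^ (2 * a - 2)) := by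
        gcongr with i
        exact hC i z hz
    _ = _ := by
        rw [← ENNReal.ofReal_sum_of_nonneg (fun i _ => mul_nonneg (hC0 i) (by positivity)),
          ← ENNReal.ofReal_mul hz1, ← Finset.sum_mul]
        congr 1
        have : z ^ (2 * a - 2 * s - 1) = z ^ (1 - 2 * s) * z ^ (2 * a - 2) := by
          rw [← Real.rpow_add hz]; congr 1; ring
        rw [this]; ring

/-- **Finiteness of the weighted mixed-derivative energy** (Appendix Lemma, Euclidean case):
for `u ∈ C_c^∞(ℝⁿ)` with CS extension `U`,
`∫₀^∞ ∫ z^{1-2s} |∇_x ∂_z U|² dx dz < ∞`. -/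
theorem mixed_energy_finite (n : ℕ) (hn : 1 ≤ n) (s : ℝ) (hs0 : 0 < s) (hs1 : s < 1)
    (u : En n → ℝ) (hu : ContDiff ℝ (⊤ : ℕ∞) u) (huc : HasCompactSupport u) :
    ∫⁻ p in (univ : Set (En n)) ×ˢ Ioi (0 : ℝ),
      ENNReal.ofReal
        (p.2 ^ (1 - 2 * s) *
          ∑ i, (pd i (fun y => deriv (CSext n s u y) p.2) p.1) ^ 2) < ⊤ := by
  obtain ⟨a, ha1, ha2⟩ : ∃ a, s < a ∧ a < min 1 (2 * s) :=
    exists_between (lt_min hs1 (by linarith))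
  rw [lt_min_iff] at ha2
  obtain ⟨C, hC0, hC⟩ := slice_bound hs0 hu huc (a := a) (by linarith) ha2.1.le ha2.2
  obtain ⟨D, hD0, hD⟩ := slice_bound hs0 hu huc (a := 0) le_rfl zero_le_one (by linarith)
  set F : En n × ℝ → ℝ≥0∞ := fun p => ENNReal.ofReal
        (p.2 ^ (1 - 2 * s) *
          ∑ i, (pd i (fun y => deriv (CSext n s u y) p.2) p.1) ^ 2) with hF
  have h1 : ∫⁻ p in (univ : Set (En n)) ×ˢ Ioi (0 : ℝ), F p ≤
      ∫⁻ z in Ioi (0 : ℝ), ∫⁻ x, F (x, z) := by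
    rw [Measure.volume_eq_prod, ← Measure.prod_restrict, Measure.restrict_univ,
      ← lintegral_prod_swap]
    exact lintegral_prod_le _
  refine h1.trans_lt ?_
  rw [← Ioc_union_Ioi_eq_Ioi (zero_le_one : (0 : ℝ) ≤ 1)]
  refine (lintegral_union_le _ _ _).trans_lt (ENNReal.add_lt_top.2 ⟨?_, ?_⟩)
  · have hi : IntegrableOn (fun z : ℝ => C * z ^ (2 * a - 2 * s - 1)) (Ioc 0 1) :=
      ((intervalIntegrable_iff_integrableOn_Ioc_of_le zero_le_one).1
        (intervalIntegral.intervalIntegrable_rpow' (by linarith))).const_mul C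
    refine lt_of_le_of_lt (setLIntegral_mono' measurableSet_Ioc fun z hz => hC z hz.1) ?_
    exact hi.lintegral_lt_top
  · have hi : IntegrableOn (fun z : ℝ => D * z ^ (2 * 0 - 2 * s - 1)) (Ioi 1) :=
      (integrableOn_Ioi_rpow_of_lt (by linarith) zero_lt_one).const_mul D
    refine lt_of_le_of_lt (setLIntegral_mono' measurableSet_Ioi fun z hz =>
      hD z (zero_lt_one.trans hz)) ?_
    exact hi.lintegral_lt_top
end
end
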